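/- Let δ > 0 and let u be an admissible map. If D_δ(u) = 0, then either ‖u‖ ≥ r(δ) or ‖u‖ = 0. In particular, if D(u) = 0 then ‖u‖ ≥ r(1) = 2√(2π)/H or ‖u‖ = 0. -/

import Mathlib

open MeasureTheory Real Filter

/-- x-partial derivative of a map `u : ℝ² → ℝ³`. -/
noncomputable def pderivX (u : ℝ × ℝ → Fin 3 → ℝ) (p : ℝ × ℝ) : Fin 3 → ℝ :=
  fderiv ℝ u p (1, 0)

/-- y-partial derivative of a map `u : ℝ² → ℝ³`. -/
noncomputable def pderivY (u : ℝ × ℝ → Fin 3 → ℝ) (p : ℝ × ℝ) : Fin 3 → ℝ :=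
  fderiv ℝ u p (0, 1)

/-- Euclidean dot product on `ℝ³`. -/
def dot3 (a b : Fin 3 → ℝ) : ℝ := ∑ i, a i * b i

/-- Squared Dirichlet norm `‖u‖² = ∫_Ω |∇u|²`. -/
noncomputable def dirEnergy (Ω : Set (ℝ × ℝ)) (u : ℝ × ℝ → Fin 3 → ℝ) : ℝ :=
  ∫ p in Ω, (dot3 (pderivX u p) (pderivX u p) + dot3 (pderivY u p) (pderivY u p))

/-- Dirichlet norm `‖u‖`. -/
noncomputable def dnorm (Ω : Set (ℝ × ℝ)) (u : ℝ × ℝ → Fin 3 → ℝ) : ℝ :=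
  Real.sqrt (dirEnergy Ω u)

/-- Volume functional `V(u) = ∫_Ω u · (u_x ∧ u_y)`. -/
noncomputable def vol (Ω : Set (ℝ × ℝ)) (u : ℝ × ℝ → Fin 3 → ℝ) : ℝ :=
  ∫ p in Ω, dot3 (u p) (crossProduct (pderivX u p) (pderivY u p))

/-- An admissible map: smooth with compact support contained in `Ω`. -/
def IsAdmissible (Ω : Set (ℝ × ℝ)) (u : ℝ × ℝ → Fin 3 → ℝ) : Prop :=
  ContDiff ℝ (⊤ : ℕ∞) u ∧ HasCompactSupport u ∧ tsupport u ⊆ Ω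

/-- Energy functional `E(u) = (1/2)‖u‖² + (2H/3)·V(u)`. -/
noncomputable def Efun (Ω : Set (ℝ × ℝ)) (H : ℝ) (u : ℝ × ℝ → Fin 3 → ℝ) : ℝ :=
  (1 / 2) * dirEnergy Ω u + (2 * H / 3) * vol Ω u

/-- Modified Nehari functional `D_δ(u) = δ‖u‖² + 2H·V(u)`; `D = D₁`. -/
noncomputable def Dfun (Ω : Set (ℝ × ℝ)) (H δ : ℝ) (u : ℝ × ℝ → Fin 3 → ℝ) : ℝ :=
  δ * dirEnergy Ω u + 2 * H * vol Ω u

/-- The radius `r(δ) = 2√(2π)·δ/H`. -/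
noncomputable def rPW (H δ : ℝ) : ℝ := 2 * Real.sqrt (2 * Real.pi) * δ / H

/-- The coefficient `a(δ) = 1/2 − δ/3`. -/
noncomputable def aPW (δ : ℝ) : ℝ := 1 / 2 - δ / 3

/-
The cone over `u` with apex the origin covers each point of `ℝ³` with a signed multiplicity; this
multiplicity `w : ℝ³ → ℤ` is a function of bounded variation: its integral is `V(u) / 3`, and its
variation is at most the area `∫ |u_x ∧ u_y|`, because the lateral faces of the cone cancel by
integration by parts. Since `w` is integer-valued, `|w| ≤ |w|^(3/2)`, so the sharp isoperimetric
(Gagliardo–Nirenberg) inequality in `ℝ³`, which comes from Brunn–Minkowski and the layer-cake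
formula, bounds `|V(u)|` by the area: `36 π (V(u) / 3)² ≤ area³`. As `area ≤ ‖u‖² / 2`, this is
`32 π V(u)² ≤ ‖u‖⁶`, and substituting `δ ‖u‖² = -2 H V(u)` leaves `‖u‖ = 0` or `‖u‖ ≥ r(δ)`.
-/

open Set Module
open scoped ENNReal NNReal Pointwise ContDiff Topology Matrix Function

section LayerCake

variable {α : Type*} [MeasurableSpace α] {μ : Measure α}

lemma setLIntegral_Ioi_indicator_ofReal_lt (a : ℝ≥0∞) :
    ∫⁻ s in Ioi (0 : ℝ), {s | ENNReal.ofReal s < a}.indicator 1 s = a := by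
  have hmeas : MeasurableSet {s : ℝ | ENNReal.ofReal s < a} :=
    measurableSet_lt ENNReal.measurable_ofReal measurable_const
  rw [lintegral_indicator_one hmeas, Measure.restrict_apply hmeas]
  rcases eq_or_ne a ⊤ with rfl | ha
  · simp
  · have hset : {s : ℝ | ENNReal.ofReal s < a} ∩ Ioi 0 = Ioo 0 a.toReal := by
      ext s
      simp only [mem_inter_iff, mem_ofPred_eq, mem_Ioi, mem_Ioo, and_comm (b := 0 < s)]
      exact and_congr_right fun hs => ENNReal.ofReal_lt_iff_lt_toReal hs.le ha
    rw [hset, Real.volume_Ioo, sub_zero, ENNReal.ofReal_toReal ha]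

lemma lintegral_eq_setLIntegral_Ioi_meas_ofReal_lt [SFinite μ] {f : α → ℝ≥0∞} (hf : Measurable f) :
    ∫⁻ x, f x ∂μ = ∫⁻ s in Ioi (0 : ℝ), μ {x | ENNReal.ofReal s < f x} := by
  have hmeas : MeasurableSet {q : α × ℝ | ENNReal.ofReal q.2 < f q.1} :=
    measurableSet_lt (ENNReal.measurable_ofReal.comp measurable_snd) (hf.comp measurable_fst)
  calc ∫⁻ x, f x ∂μ
      = ∫⁻ x, (∫⁻ s in Ioi (0 : ℝ), {s | ENNReal.ofReal s < f x}.indicator 1 s) ∂μ :=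
        lintegral_congr fun x => (setLIntegral_Ioi_indicator_ofReal_lt (f x)).symm
    _ = ∫⁻ s in Ioi (0 : ℝ), ∫⁻ x, {x | ENNReal.ofReal s < f x}.indicator 1 x ∂μ :=
        lintegral_lintegral_swap
          (f := fun x s => {q : α × ℝ | ENNReal.ofReal q.2 < f q.1}.indicator 1 (x, s))
          (measurable_one.indicator hmeas).aemeasurable
    _ = ∫⁻ s in Ioi (0 : ℝ), μ {x | ENNReal.ofReal s < f x} :=
        lintegral_congr fun s => lintegral_indicator_one (measurableSet_lt measurable_const hf)

lemma measurable_meas_ofReal_lt (f : α → ℝ≥0∞) :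
    Measurable fun s : ℝ => μ {x | ENNReal.ofReal s < f x} :=
  Antitone.measurable fun _ _ hst =>
    measure_mono fun _ hx => (ENNReal.ofReal_le_ofReal hst).trans_lt hx

end LayerCake

section PrekopaLeindler

lemma volume_add_volume_le_of_isCompact {K L : Set ℝ} (hK : IsCompact K) (hL : IsCompact L)
    (hKne : K.Nonempty) (hLne : L.Nonempty) : volume K + volume L ≤ volume (K + L) := by
  obtain ⟨a, ha, hamax⟩ := hK.exists_isGreatest hKne
  obtain ⟨b, hb, hbmin⟩ := hL.exists_isLeast hLne
  -- `K + b` and `a + L` meet only at `a + b`.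
  have hdisj : AEDisjoint volume ((· + b) '' K) ((a + ·) '' L) := by
    refine measure_mono_null (t := {a + b}) ?_ (by simp)
    rintro z ⟨⟨x, hx, rfl⟩, ⟨y, hy, hxy⟩⟩
    have hxa : x ≤ a := hamax hx
    have hby : b ≤ y := hbmin hy
    simp only [mem_singleton_iff] at hxy ⊢
    linarith
  calc volume K + volume L = volume ((· + b) '' K) + volume ((a + ·) '' L) := by
        simp only [image_add_right, image_add_left, measure_preimage_add_right,
          measure_preimage_add]
    _ = volume ((· + b) '' K ∪ (a + ·) '' L) :=
        (measure_union₀ (hL.image (by fun_prop)).measurableSet.nullMeasurableSet hdisj).symm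
    _ ≤ volume (K + L) := measure_mono <| union_subset
        (image_subset_iff.2 fun _ hx => add_mem_add hx hb)
        (image_subset_iff.2 fun _ hy => add_mem_add ha hy)

lemma volume_add_volume_le {A B : Set ℝ} (hA : MeasurableSet A) (hB : MeasurableSet B)
    (hAne : A.Nonempty) (hBne : B.Nonempty) : volume A + volume B ≤ volume (A + B) := by
  obtain ⟨a, ha⟩ := hAne
  obtain ⟨b, hb⟩ := hBne
  rw [hA.measure_eq_iSup_isCompact, hB.measure_eq_iSup_isCompact]
  simp only [iSup_and']
  have hempty (S : Set ℝ) : ∃ K, K ⊆ S ∧ IsCompact K := ⟨∅, empty_subset S, isCompact_empty⟩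
  refine ENNReal.biSup_add_biSup_le' (hempty A) (hempty B) fun K ⟨hKA, hK⟩ L ⟨hLB, hL⟩ => ?_
  calc volume K + volume L ≤ volume (insert a K) + volume (insert b L) := by
        gcongr <;> exact subset_insert _ _
    _ ≤ volume (insert a K + insert b L) :=
        volume_add_volume_le_of_isCompact (hK.insert a) (hL.insert b)
          (insert_nonempty a K) (insert_nonempty b L)
    _ ≤ volume (A + B) :=
        measure_mono (add_subset_add (insert_subset ha hKA) (insert_subset hb hLB))

lemma ennreal_geom_mean_le_arith_mean2_weighted {t : ℝ} (ht : t ∈ Ioo 0 1) (a b : ℝ≥0∞) :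
    a ^ (1 - t) * b ^ t ≤ ENNReal.ofReal (1 - t) * a + ENNReal.ofReal t * b := by
  have h1t : 0 < 1 - t := sub_pos.2 ht.2
  rcases eq_or_ne a ⊤ with rfl | ha
  · simp [ENNReal.mul_top (ENNReal.ofReal_pos.2 h1t).ne']
  rcases eq_or_ne b ⊤ with rfl | hb
  · simp [ENNReal.mul_top (ENNReal.ofReal_pos.2 ht.1).ne']
  lift a to ℝ≥0 using ha
  lift b to ℝ≥0 using hb
  rw [← ENNReal.coe_rpow_of_nonneg _ h1t.le, ← ENNReal.coe_rpow_of_nonneg _ ht.1.le]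
  have hsum : (1 - t).toNNReal + t.toNNReal = 1 := by
    rw [← Real.toNNReal_add h1t.le ht.1.le, sub_add_cancel, Real.toNNReal_one]
  have hamgm := NNReal.geom_mean_le_arith_mean2_weighted _ _ a b hsum
  rw [Real.coe_toNNReal _ h1t.le, Real.coe_toNNReal _ ht.1.le] at hamgm
  rw [ENNReal.ofReal, ENNReal.ofReal]
  exact_mod_cast hamgm

/-- The Prékopa–Leindler inequality, as a property of a measure `μ` on a real vector space. -/
def PrekopaLeindler {E : Type*} [AddCommGroup E] [Module ℝ E] [MeasurableSpace E]
    (μ : Measure E) : Prop :=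
  ∀ ⦃t : ℝ⦄, t ∈ Ioo 0 1 → ∀ ⦃f g h : E → ℝ≥0∞⦄, Measurable f → Measurable g → Measurable h →
    (∀ x y, f x ^ (1 - t) * g y ^ t ≤ h ((1 - t) • x + t • y)) →
    (∫⁻ x, f x ∂μ) ^ (1 - t) * (∫⁻ x, g x ∂μ) ^ t ≤ ∫⁻ x, h x ∂μ

section Real

variable {t : ℝ} {f g h : ℝ → ℝ≥0∞}

lemma ofReal_mul_lintegral_add_le_lintegral (ht : t ∈ Ioo 0 1) (hf : Measurable f)
    (hg : Measurable g) (hh : Measurable h) (hf1 : ⨆ x, f x = 1) (hg1 : ⨆ x, g x = 1)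
    (hfgh : ∀ x y, f x ^ (1 - t) * g y ^ t ≤ h ((1 - t) • x + t • y)) :
    ENNReal.ofReal (1 - t) * (∫⁻ x, f x) + ENNReal.ofReal t * (∫⁻ x, g x) ≤ ∫⁻ x, h x := by
  have h1t : 0 < 1 - t := sub_pos.2 ht.2
  have hscale {c : ℝ} (hc : 0 < c) (S : Set ℝ) :
      ENNReal.ofReal c * volume S = volume (c • S) := by
    rw [Measure.addHaar_smul, finrank_self, pow_one, abs_of_pos hc]
  have hlevel {k : ℝ → ℝ≥0∞} (hk : Measurable k) (s : ℝ≥0∞) : MeasurableSet {x | s < k x} :=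
    measurableSet_lt measurable_const hk
  have hne {k : ℝ → ℝ≥0∞} (hk1 : ⨆ x, k x = 1) {s : ℝ≥0∞} (hs : s < 1) :
      {x | s < k x}.Nonempty :=
    lt_iSup_iff.1 (hs.trans_eq hk1.symm)
  rw [lintegral_eq_setLIntegral_Ioi_meas_ofReal_lt hf,
    lintegral_eq_setLIntegral_Ioi_meas_ofReal_lt hg,
    lintegral_eq_setLIntegral_Ioi_meas_ofReal_lt hh,
    ← lintegral_const_mul _ (measurable_meas_ofReal_lt f),
    ← lintegral_const_mul _ (measurable_meas_ofReal_lt g),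
    ← lintegral_add_left ((measurable_meas_ofReal_lt f).const_mul _)]
  refine lintegral_mono fun s => ?_
  set r := ENNReal.ofReal s
  rcases lt_or_ge r 1 with hr | hr
  · rw [hscale h1t, hscale ht.1]
    refine (volume_add_volume_le ((hlevel hf r).const_smul₀ _) ((hlevel hg r).const_smul₀ _)
      (hne hf1 hr).smul_set (hne hg1 hr).smul_set).trans (measure_mono ?_)
    rintro _ ⟨_, ⟨x, hx, rfl⟩, _, ⟨y, hy, rfl⟩, rfl⟩
    calc r = r ^ (1 - t) * r ^ t := by
          rw [← ENNReal.rpow_add_of_nonneg _ _ h1t.le ht.1.le, sub_add_cancel, ENNReal.rpow_one]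
      _ < f x ^ (1 - t) * g y ^ t :=
          ENNReal.mul_lt_mul (ENNReal.rpow_lt_rpow hx h1t) (ENNReal.rpow_lt_rpow hy ht.1)
      _ ≤ h ((1 - t) • x + t • y) := hfgh x y
  · have hnot {k : ℝ → ℝ≥0∞} (hk1 : ⨆ x, k x = 1) : {x | r < k x} = ∅ :=
      eq_empty_of_forall_notMem fun x hx => (hr.trans_lt hx).not_ge (hk1 ▸ le_iSup k x)
    simp [hnot hf1, hnot hg1]

lemma lintegral_rpow_mul_lintegral_rpow_le_of_iSup_ne_top (ht : t ∈ Ioo 0 1) (hf : Measurable f)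
    (hg : Measurable g) (hh : Measurable h) (hf_top : ⨆ x, f x ≠ ⊤) (hg_top : ⨆ x, g x ≠ ⊤)
    (hfgh : ∀ x y, f x ^ (1 - t) * g y ^ t ≤ h ((1 - t) • x + t • y)) :
    (∫⁻ x, f x) ^ (1 - t) * (∫⁻ x, g x) ^ t ≤ ∫⁻ x, h x := by
  have h1t : 0 < 1 - t := sub_pos.2 ht.2
  set a := ⨆ x, f x with ha
  set b := ⨆ x, g x with hb
  rcases eq_or_ne a 0 with ha0 | ha0
  · simp [ENNReal.iSup_eq_zero.1 (ha.symm.trans ha0), ENNReal.zero_rpow_of_pos h1t]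
  rcases eq_or_ne b 0 with hb0 | hb0
  · simp [ENNReal.iSup_eq_zero.1 (hb.symm.trans hb0), ENNReal.zero_rpow_of_pos ht.1]
  set c := a ^ (1 - t) * b ^ t with hc
  have hc_top : c ≠ ⊤ := ENNReal.mul_ne_top (ENNReal.rpow_ne_top_of_nonneg h1t.le hf_top)
    (ENNReal.rpow_ne_top_of_nonneg ht.1.le hg_top)
  have hc0 : c ≠ 0 := mul_ne_zero (by simp [ENNReal.rpow_eq_zero_iff, ha0, hf_top])
    (by simp [ENNReal.rpow_eq_zero_iff, hb0, hg_top])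
  have hdiv (X Y : ℝ≥0∞) : (X / a) ^ (1 - t) * (Y / b) ^ t = X ^ (1 - t) * Y ^ t / c := by
    rw [ENNReal.div_rpow_of_nonneg _ _ h1t.le, ENNReal.div_rpow_of_nonneg _ _ ht.1.le, hc]
    refine (ENNReal.mul_div_mul_comm ?_ ?_).symm
    · exact Or.inl (by simp [ENNReal.rpow_eq_zero_iff, ha0, hf_top])
    · exact Or.inl (ENNReal.rpow_ne_top_of_nonneg h1t.le hf_top)
  have hnormalized := ofReal_mul_lintegral_add_le_lintegral (f := fun x => f x / a)
    (g := fun x => g x / b) (h := fun x => h x / c) ht (hf.div_const a) (hg.div_const b)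
    (hh.div_const c) (by rw [← ENNReal.iSup_div, ENNReal.div_self ha0 hf_top])
    (by rw [← ENNReal.iSup_div, ENNReal.div_self hb0 hg_top])
    (fun x y => by rw [hdiv]; exact ENNReal.div_le_div_right (hfgh x y) c)
  have hamgm := (ennreal_geom_mean_le_arith_mean2_weighted ht _ _).trans hnormalized
  simp only [div_eq_mul_inv, lintegral_mul_const _ hf, lintegral_mul_const _ hg,
    lintegral_mul_const _ hh] at hamgm
  simp only [← div_eq_mul_inv, hdiv] at hamgm
  rwa [ENNReal.div_le_iff hc0 hc_top, ENNReal.div_mul_cancel hc0 hc_top] at hamgm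

end Real

lemma lintegral_rpow_eq_iSup_lintegral_min_rpow {α : Type*} [MeasurableSpace α] (μ : Measure α)
    {f : α → ℝ≥0∞} (hf : Measurable f) {t : ℝ} (ht : 0 < t) :
    (∫⁻ x, f x ∂μ) ^ t = ⨆ n : ℕ, (∫⁻ x, min (f x) n ∂μ) ^ t := by
  have hmono : Monotone fun (n : ℕ) x => min (f x) (n : ℝ≥0∞) :=
    fun _ _ hmn _ => min_le_min_left _ (Nat.cast_le.2 hmn)
  calc (∫⁻ x, f x ∂μ) ^ t = (∫⁻ x, ⨆ n : ℕ, min (f x) n ∂μ) ^ t := by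
        simp only [← inf_iSup_eq, ENNReal.iSup_natCast, le_top, inf_of_le_left]
    _ = (⨆ n : ℕ, ∫⁻ x, min (f x) n ∂μ) ^ t := by
        rw [lintegral_iSup (fun n => hf.min measurable_const) hmono]
    _ = ⨆ n : ℕ, (∫⁻ x, min (f x) n ∂μ) ^ t :=
        (ENNReal.orderIsoRpow t ht).map_iSup _

lemma prekopaLeindler_volume_real : PrekopaLeindler (volume : Measure ℝ) := by
  intro t ht f g h hf hg hh hfgh
  rw [lintegral_rpow_eq_iSup_lintegral_min_rpow _ hf (sub_pos.2 ht.2),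
    lintegral_rpow_eq_iSup_lintegral_min_rpow _ hg ht.1, ENNReal.iSup_mul]
  simp only [ENNReal.mul_iSup]
  refine iSup₂_le fun m n => ?_
  have hbdd (k : ℝ → ℝ≥0∞) (n : ℕ) : ⨆ x, min (k x) (n : ℝ≥0∞) ≠ ⊤ :=
    ne_top_of_le_ne_top (ENNReal.natCast_ne_top n) (iSup_le fun x => min_le_right _ _)
  refine lintegral_rpow_mul_lintegral_rpow_le_of_iSup_ne_top ht (hf.min measurable_const)
    (hg.min measurable_const) hh (hbdd f m) (hbdd g n) fun x y => le_trans ?_ (hfgh x y)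
  gcongr
  exacts [sub_nonneg.2 ht.2.le, min_le_left _ _, ht.1.le, min_le_left _ _]

variable {E F : Type*} [AddCommGroup E] [Module ℝ E] [MeasurableSpace E]
  [AddCommGroup F] [Module ℝ F] [MeasurableSpace F] {μ : Measure E} {ν : Measure F}

namespace PrekopaLeindler

lemma prod [SFinite ν] (hμ : PrekopaLeindler μ) (hν : PrekopaLeindler ν) :
    PrekopaLeindler (μ.prod ν) := by
  intro t ht f g h hf hg hh hfgh
  rw [lintegral_prod _ hf.aemeasurable, lintegral_prod _ hg.aemeasurable,
    lintegral_prod _ hh.aemeasurable]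
  refine hμ ht hf.lintegral_prod_right' hg.lintegral_prod_right' hh.lintegral_prod_right'
    fun x y => ?_
  exact hν ht (hf.comp measurable_prodMk_left) (hg.comp measurable_prodMk_left)
    (hh.comp measurable_prodMk_left) fun x' y' => hfgh (x, x') (y, y')

lemma map (hμ : PrekopaLeindler μ) {L : E →ₗ[ℝ] F} (hL : Measurable L) :
    PrekopaLeindler (μ.map L) := by
  intro t ht f g h hf hg hh hfgh
  rw [lintegral_map hf hL, lintegral_map hg hL, lintegral_map hh hL]
  refine hμ ht (hf.comp hL) (hg.comp hL) (hh.comp hL) fun x y => ?_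
  simpa only [Function.comp_apply, map_add, map_smul] using hfgh (L x) (L y)

lemma smul (hμ : PrekopaLeindler μ) (c : ℝ≥0∞) : PrekopaLeindler (c • μ) := by
  intro t ht f g h hf hg hh hfgh
  have h1t : 0 ≤ 1 - t := sub_nonneg.2 ht.2.le
  simp only [lintegral_smul_measure, smul_eq_mul]
  rw [ENNReal.mul_rpow_of_nonneg _ _ h1t, ENNReal.mul_rpow_of_nonneg _ _ ht.1.le, mul_mul_mul_comm,
    ← ENNReal.rpow_add_of_nonneg _ _ h1t ht.1.le, sub_add_cancel, ENNReal.rpow_one]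
  gcongr
  exact hμ ht hf hg hh hfgh

lemma measure_rpow_mul_measure_rpow_le (hμ : PrekopaLeindler μ) {t : ℝ} (ht : t ∈ Ioo 0 1)
    {A B : Set E} (hA : MeasurableSet A) (hB : MeasurableSet B) :
    μ A ^ (1 - t) * μ B ^ t ≤ μ ((1 - t) • A + t • B) := by
  set C := toMeasurable μ ((1 - t) • A + t • B)
  have hC : MeasurableSet C := measurableSet_toMeasurable _ _
  have hABC (x y : E) : A.indicator (1 : E → ℝ≥0∞) x ^ (1 - t) * B.indicator 1 y ^ t ≤
      C.indicator 1 ((1 - t) • x + t • y) := by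
    by_cases hx : x ∈ A
    · by_cases hy : y ∈ B
      · have hxy : (1 - t) • x + t • y ∈ C := subset_toMeasurable _ _
          (add_mem_add (smul_mem_smul_set hx) (smul_mem_smul_set hy))
        simp [hx, hy, hxy]
      · simp [hy, ENNReal.zero_rpow_of_pos ht.1]
    · simp [hx, ENNReal.zero_rpow_of_pos (sub_pos.2 ht.2)]
  have hlintegral := hμ ht (measurable_one.indicator hA) (measurable_one.indicator hB)
    (measurable_one.indicator hC) hABC
  rwa [lintegral_indicator_one hA, lintegral_indicator_one hB, lintegral_indicator_one hC,
    measure_toMeasurable] at hlintegral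

end PrekopaLeindler

lemma prekopaLeindler_dirac (x : E) : PrekopaLeindler (Measure.dirac x) := by
  intro t _ f g h hf hg hh hfgh
  rw [lintegral_dirac' x hf, lintegral_dirac' x hg, lintegral_dirac' x hh]
  simpa only [← add_smul, sub_add_cancel, one_smul] using hfgh x x

lemma prekopaLeindler_volume_pi (n : ℕ) : PrekopaLeindler (volume : Measure (Fin n → ℝ)) := by
  induction n with
  | zero => simpa only [Measure.volume_pi_eq_dirac 0] using prekopaLeindler_dirac (0 : Fin 0 → ℝ)
  | succ n ih =>
    let cons := Fin.consLinearEquiv ℝ fun _ : Fin (n + 1) => ℝ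
    have hcons : MeasurePreserving cons := by
      convert (volume_preserving_piFinSuccAbove (fun _ : Fin (n + 1) => ℝ) 0).symm using 1
      ext x i
      cases i using Fin.cases <;> simp [cons]
    rw [← hcons.map_eq]
    exact (prekopaLeindler_volume_real.prod ih).map (L := cons.toLinearMap) hcons.measurable

lemma prekopaLeindler_of_isAddHaarMeasure {E : Type*} [NormedAddCommGroup E] [NormedSpace ℝ E]
    [FiniteDimensional ℝ E] [MeasurableSpace E] [BorelSpace E] (μ : Measure E)
    [μ.IsAddHaarMeasure] : PrekopaLeindler μ := by
  let e : (Fin (finrank ℝ E) → ℝ) ≃L[ℝ] E :=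
    ContinuousLinearEquiv.ofFinrankEq (finrank_fin_fun ℝ)
  have : (volume.map e).IsAddHaarMeasure := e.isAddHaarMeasure_map volume
  rw [Measure.isAddLeftInvariant_eq_smul μ (volume.map e)]
  exact ((prekopaLeindler_volume_pi _).map (L := e.toLinearMap)
    e.continuous.measurable).smul _

end PrekopaLeindler

section BrunnMinkowski

variable {E : Type*} [NormedAddCommGroup E] [NormedSpace ℝ E] [FiniteDimensional ℝ E]
  [MeasurableSpace E] [BorelSpace E] (μ : Measure E) [μ.IsAddHaarMeasure] {A B : Set E}

lemma measure_inv_smul_eq_one [Nontrivial E] {r : ℝ} (hr : 0 < r)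
    (hA : μ A ^ (finrank ℝ E : ℝ)⁻¹ = ENNReal.ofReal r) : μ (r⁻¹ • A) = 1 := by
  have hn : (finrank ℝ E : ℝ) ≠ 0 := Nat.cast_ne_zero.2 finrank_pos.ne'
  have hA' : μ A = ENNReal.ofReal (r ^ finrank ℝ E) := by
    rw [ENNReal.ofReal_pow hr.le, ← hA, ← ENNReal.rpow_natCast, ENNReal.rpow_inv_rpow hn]
  rw [Measure.addHaar_smul_of_nonneg _ (inv_nonneg.2 hr.le), hA',
    ← ENNReal.ofReal_mul (by positivity), ← mul_pow, inv_mul_cancel₀ hr.ne', one_pow,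
    ENNReal.ofReal_one]

lemma brunn_minkowski_of_eq_ofReal [Nontrivial E] (hA : MeasurableSet A) (hB : MeasurableSet B)
    {a b : ℝ} (ha : 0 < a) (hb : 0 < b) (hAa : μ A ^ (finrank ℝ E : ℝ)⁻¹ = ENNReal.ofReal a)
    (hBb : μ B ^ (finrank ℝ E : ℝ)⁻¹ = ENNReal.ofReal b) :
    ENNReal.ofReal (a + b) ≤ μ (A + B) ^ (finrank ℝ E : ℝ)⁻¹ := by
  set n := finrank ℝ E
  have hn : 0 < (n : ℝ) := Nat.cast_pos.2 finrank_pos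
  have hab : 0 < a + b := by positivity
  have ht : b / (a + b) ∈ Ioo (0 : ℝ) 1 := ⟨by positivity, (div_lt_one hab).2 (by linarith)⟩
  have hcombine : (1 - b / (a + b)) • a⁻¹ • A + (b / (a + b)) • b⁻¹ • B = (a + b)⁻¹ • (A + B) := by
    rw [smul_smul, smul_smul, smul_add]
    congr 2 <;> field_simp
    ring
  have hone : 1 ≤ ENNReal.ofReal ((a + b)⁻¹ ^ n) * μ (A + B) := by
    have hPL := (prekopaLeindler_of_isAddHaarMeasure μ).measure_rpow_mul_measure_rpow_le ht
      (hA.const_smul₀ a⁻¹) (hB.const_smul₀ b⁻¹)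
    rwa [measure_inv_smul_eq_one μ ha hAa, measure_inv_smul_eq_one μ hb hBb,
      ENNReal.one_rpow, ENNReal.one_rpow, one_mul, hcombine,
      Measure.addHaar_smul_of_nonneg _ (by positivity)] at hPL
  rw [ENNReal.le_rpow_inv_iff hn, ENNReal.rpow_natCast, ← ENNReal.ofReal_pow hab.le]
  calc ENNReal.ofReal ((a + b) ^ n)
      ≤ ENNReal.ofReal ((a + b) ^ n) * (ENNReal.ofReal ((a + b)⁻¹ ^ n) * μ (A + B)) :=
        le_mul_of_one_le_right' hone
    _ = μ (A + B) := by
        rw [← mul_assoc, ← ENNReal.ofReal_mul (by positivity), ← mul_pow, mul_inv_cancel₀ hab.ne',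
          one_pow, ENNReal.ofReal_one, one_mul]

theorem brunn_minkowski [Nontrivial E] (hA : MeasurableSet A) (hB : MeasurableSet B)
    (hAne : A.Nonempty) (hBne : B.Nonempty) :
    μ A ^ (finrank ℝ E : ℝ)⁻¹ + μ B ^ (finrank ℝ E : ℝ)⁻¹ ≤ μ (A + B) ^ (finrank ℝ E : ℝ)⁻¹ := by
  obtain ⟨a, ha⟩ := hAne
  obtain ⟨b, hb⟩ := hBne
  have hn : 0 < (finrank ℝ E : ℝ)⁻¹ := inv_pos.2 (Nat.cast_pos.2 finrank_pos)
  have hAle : μ A ≤ μ (A + B) :=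
    (measure_vadd μ b A).ge.trans <| measure_mono <| by
      rintro _ ⟨x, hx, rfl⟩
      exact (add_comm x b).subst (motive := (· ∈ A + B)) (add_mem_add hx hb)
  have hBle : μ B ≤ μ (A + B) :=
    (measure_vadd μ a B).ge.trans <| measure_mono <| by
      rintro _ ⟨y, hy, rfl⟩
      exact add_mem_add ha hy
  set α := μ A ^ (finrank ℝ E : ℝ)⁻¹
  set β := μ B ^ (finrank ℝ E : ℝ)⁻¹
  have hαle : α ≤ μ (A + B) ^ (finrank ℝ E : ℝ)⁻¹ := ENNReal.rpow_le_rpow hAle hn.le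
  have hβle : β ≤ μ (A + B) ^ (finrank ℝ E : ℝ)⁻¹ := ENNReal.rpow_le_rpow hBle hn.le
  rcases eq_or_ne α 0 with hα0 | hα0
  · rwa [hα0, zero_add]
  rcases eq_or_ne β 0 with hβ0 | hβ0
  · rwa [hβ0, add_zero]
  rcases eq_or_ne α ⊤ with hα_top | hα_top
  · exact le_top.trans (hα_top.symm.le.trans hαle)
  rcases eq_or_ne β ⊤ with hβ_top | hβ_top
  · exact le_top.trans (hβ_top.symm.le.trans hβle)
  rw [← ENNReal.ofReal_toReal hα_top, ← ENNReal.ofReal_toReal hβ_top,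
    ← ENNReal.ofReal_add ENNReal.toReal_nonneg ENNReal.toReal_nonneg]
  exact brunn_minkowski_of_eq_ofReal μ hA hB (ENNReal.toReal_pos hα0 hα_top)
    (ENNReal.toReal_pos hβ0 hβ_top) (ENNReal.ofReal_toReal hα_top).symm
    (ENNReal.ofReal_toReal hβ_top).symm

end BrunnMinkowski

section Sobolev

variable {E : Type*} [NormedAddCommGroup E] [NormedSpace ℝ E]
  {F : Type*} [NormedAddCommGroup F] [NormedSpace ℝ F] {f : E → F}

lemma exists_enorm_le_of_dist_lt (hf : ContDiff ℝ 1 f) (hsupp : HasCompactSupport f) {κ : ℝ≥0}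
    (hκ : 0 < κ) : ∃ r : ℝ≥0, 0 < r ∧ ∀ x z, dist x z < r →
      ‖f x‖ₑ ≤ ‖f z‖ₑ +
        r * (‖fderiv ℝ f z‖ₑ + κ * (Metric.cthickening 1 (tsupport f)).indicator 1 z) := by
  have huc : UniformContinuous (fderiv ℝ f) :=
    (hsupp.fderiv ℝ).uniformContinuous_of_continuous (hf.continuous_fderiv one_ne_zero)
  obtain ⟨δ, hδ, hclose⟩ := Metric.uniformContinuous_iff.1 huc κ hκ
  refine ⟨⟨min δ 1, by positivity⟩, lt_min hδ one_pos, fun x z hxz => ?_⟩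
  set r : ℝ≥0 := ⟨min δ 1, by positivity⟩
  have hrδ : (r : ℝ) ≤ δ := min_le_left _ _
  have hr1 : (r : ℝ) ≤ 1 := min_le_right _ _
  by_cases hz : z ∈ Metric.cthickening 1 (tsupport f)
  · have hfderiv (p : E) (hp : p ∈ Metric.ball z r) : ‖fderiv ℝ f p‖ ≤ ‖fderiv ℝ f z‖ + κ := by
      have hpz := hclose (hp.out.trans_le hrδ)
      rw [dist_eq_norm] at hpz
      linarith [norm_le_norm_add_norm_sub' (fderiv ℝ f p) (fderiv ℝ f z)]
    have hmvt : ‖f x - f z‖ ≤ (‖fderiv ℝ f z‖ + κ) * ‖x - z‖ :=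
      (convex_ball z (r : ℝ)).norm_image_sub_le_of_norm_fderiv_le
        (fun p _ => hf.differentiable one_ne_zero p) hfderiv
        (Metric.mem_ball_self (dist_nonneg.trans_lt hxz)) hxz
    have hreal : ‖f x‖ ≤ ‖f z‖ + r * (‖fderiv ℝ f z‖ + κ) :=
      calc ‖f x‖ ≤ ‖f z‖ + ‖f x - f z‖ := norm_le_norm_add_norm_sub' _ _
        _ ≤ ‖f z‖ + (‖fderiv ℝ f z‖ + κ) * r := by
            rw [dist_eq_norm] at hxz
            gcongr
            exact hmvt.trans (by gcongr)
        _ = ‖f z‖ + r * (‖fderiv ℝ f z‖ + κ) := by rw [mul_comm]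
    rw [indicator_of_mem hz, Pi.one_apply, mul_one]
    simp only [enorm]
    exact_mod_cast hreal
  · have hfx : f x = 0 := image_eq_zero_of_notMem_tsupport fun hx =>
      hz (Metric.mem_cthickening_of_dist_le z x 1 _ hx (by rw [dist_comm]; linarith))
    simp [hfx]

variable [FiniteDimensional ℝ E] [MeasurableSpace E] [BorelSpace E]

/-- The constant `n ωₙ^(1/n)` of the sharp isoperimetric inequality with respect to the measure
`μ`, where `ωₙ` is the measure of the unit ball of the `n`-dimensional normed space `E`. -/
noncomputable def isoperimetricConst (μ : Measure E) : ℝ≥0∞ :=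
  finrank ℝ E * μ (Metric.ball 0 1) ^ (finrank ℝ E : ℝ)⁻¹

lemma pow_add_mul_pow_pred_mul_le_add_pow (n : ℕ) (a b : ℝ≥0∞) :
    a ^ n + n * a ^ (n - 1) * b ≤ (a + b) ^ n := by
  induction n with
  | zero => simp
  | succ n ih =>
    have hpow : n * a ^ (n - 1) * a = n * a ^ n := by
      rcases n with _ | n
      · simp
      · rw [Nat.add_sub_cancel, mul_assoc, ← pow_succ]
    calc a ^ (n + 1) + (n + 1 : ℕ) * a ^ (n + 1 - 1) * b
        = a ^ n * a + n * a ^ n * b + a ^ n * b := by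
          rw [Nat.add_sub_cancel]; push_cast; ring
      _ = (a ^ n + n * a ^ (n - 1) * b) * a + a ^ n * b := by rw [← hpow]; ring
      _ ≤ (a + b) ^ n * a + (a + b) ^ n * b := by gcongr; exact le_self_add
      _ = (a + b) ^ (n + 1) := by ring

variable (μ : Measure E) [μ.IsAddHaarMeasure]

lemma measure_add_mul_rpow_le_measure_add_ball (hn : 1 < finrank ℝ E) {A : Set E}
    (hA : MeasurableSet A) {r : ℝ} (hr : 0 < r) :
    μ A + ENNReal.ofReal r * (isoperimetricConst μ * μ A ^ (1 - (finrank ℝ E : ℝ)⁻¹)) ≤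
      μ (A + Metric.ball 0 r) := by
  have : Nontrivial E := nontrivial_of_finrank_pos (one_pos.trans hn)
  have hexp : 0 < 1 - (finrank ℝ E : ℝ)⁻¹ :=
    sub_pos.2 (inv_lt_one_of_one_lt₀ (by exact_mod_cast hn))
  rcases A.eq_empty_or_nonempty with rfl | hAne
  · simp [ENNReal.zero_rpow_of_pos hexp]
  rw [isoperimetricConst]
  set n := finrank ℝ E
  set α := μ A ^ (n : ℝ)⁻¹ with hα
  set β := ENNReal.ofReal r * μ (Metric.ball 0 1) ^ (n : ℝ)⁻¹ with hβ
  have hn0 : (n : ℝ) ≠ 0 := by positivity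
  have hαn : α ^ n = μ A := by rw [hα, ← ENNReal.rpow_natCast, ENNReal.rpow_inv_rpow hn0]
  have hα_pred : α ^ (n - 1) = μ A ^ (1 - (n : ℝ)⁻¹) := by
    rw [hα, ← ENNReal.rpow_natCast, ← ENNReal.rpow_mul, Nat.cast_sub hn.le, Nat.cast_one]
    congr 1
    field_simp
  have hball : μ (Metric.ball 0 r) ^ (n : ℝ)⁻¹ = β := by
    rw [Measure.addHaar_ball_of_pos _ _ hr, ENNReal.mul_rpow_of_nonneg _ _ (by positivity),
      ENNReal.ofReal_pow hr.le, ← ENNReal.rpow_natCast, ENNReal.rpow_rpow_inv hn0]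
  calc μ A + ENNReal.ofReal r * (n * μ (Metric.ball 0 1) ^ (n : ℝ)⁻¹ * μ A ^ (1 - (n : ℝ)⁻¹))
      = α ^ n + n * α ^ (n - 1) * β := by rw [hαn, hα_pred, hβ]; ring
    _ ≤ (α + β) ^ n := pow_add_mul_pow_pred_mul_le_add_pow n α β
    _ ≤ (μ (A + Metric.ball 0 r) ^ (n : ℝ)⁻¹) ^ n := by
        gcongr
        exact hball ▸ brunn_minkowski μ hA Metric.isOpen_ball.measurableSet hAne
          (Metric.nonempty_ball.2 hr)
    _ = μ (A + Metric.ball 0 r) := by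
        rw [← ENNReal.rpow_natCast, ENNReal.rpow_inv_rpow hn0]

lemma lintegral_add_mul_lintegral_meas_rpow_le (hn : 1 < finrank ℝ E) {f g : E → ℝ≥0∞}
    (hf : Measurable f) (hg : Measurable g) {r : ℝ} (hr : 0 < r)
    (hfg : ∀ x z, dist x z < r → f x ≤ g z) :
    (∫⁻ x, f x ∂μ) + ENNReal.ofReal r * (isoperimetricConst μ *
        ∫⁻ s in Ioi (0 : ℝ), μ {x | ENNReal.ofReal s < f x} ^ (1 - (finrank ℝ E : ℝ)⁻¹)) ≤
      ∫⁻ x, g x ∂μ := by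
  have hmeas := measurable_meas_ofReal_lt (μ := μ) f
  rw [lintegral_eq_setLIntegral_Ioi_meas_ofReal_lt hf,
    lintegral_eq_setLIntegral_Ioi_meas_ofReal_lt hg,
    ← lintegral_const_mul _ (hmeas.pow_const _),
    ← lintegral_const_mul _ ((hmeas.pow_const _).const_mul _), ← lintegral_add_left hmeas]
  refine lintegral_mono fun s => ?_
  refine (measure_add_mul_rpow_le_measure_add_ball μ hn
    (measurableSet_lt measurable_const hf) hr).trans (measure_mono ?_)
  rintro _ ⟨x, hx, y, hy, rfl⟩
  exact lt_of_lt_of_le hx (hfg x (x + y) (by simpa using hy))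

theorem isoperimetricConst_mul_lintegral_meas_rpow_le (hn : 1 < finrank ℝ E)
    (hf : ContDiff ℝ 1 f) (hsupp : HasCompactSupport f) :
    isoperimetricConst μ * ∫⁻ s in Ioi (0 : ℝ),
        μ {x | ENNReal.ofReal s < ‖f x‖ₑ} ^ (1 - (finrank ℝ E : ℝ)⁻¹) ≤
      ∫⁻ x, ‖fderiv ℝ f x‖ₑ ∂μ := by
  set K := Metric.cthickening 1 (tsupport f)
  have hKfin : μ K ≠ ⊤ := hsupp.cthickening.measure_lt_top.ne
  have hKmeas : MeasurableSet K := Metric.isClosed_cthickening.measurableSet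
  have hfm : Measurable fun x => ‖f x‖ₑ := hf.continuous.enorm.measurable
  have hDm : Measurable fun x => ‖fderiv ℝ f x‖ₑ :=
    (hf.continuous_fderiv one_ne_zero).enorm.measurable
  have hIm : Measurable (K.indicator (1 : E → ℝ≥0∞)) := measurable_one.indicator hKmeas
  have hint : ∫⁻ x, ‖f x‖ₑ ∂μ ≠ ⊤ :=
    (hf.continuous.integrable_of_hasCompactSupport hsupp).hasFiniteIntegral.ne
  have happrox (κ : ℝ≥0) (hκ : 0 < κ) : isoperimetricConst μ * ∫⁻ s in Ioi (0 : ℝ),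
      μ {x | ENNReal.ofReal s < ‖f x‖ₑ} ^ (1 - (finrank ℝ E : ℝ)⁻¹) ≤
        (∫⁻ x, ‖fderiv ℝ f x‖ₑ ∂μ) + κ * μ K := by
    obtain ⟨r, hr, hle⟩ := exists_enorm_le_of_dist_lt hf hsupp hκ
    have hκm : Measurable fun x => ‖fderiv ℝ f x‖ₑ + κ * K.indicator 1 x :=
      hDm.add (hIm.const_mul κ)
    have hlevel := lintegral_add_mul_lintegral_meas_rpow_le μ hn hfm
      (hfm.add (hκm.const_mul r)) (NNReal.coe_pos.2 hr) hle
    rw [ENNReal.ofReal_coe_nnreal] at hlevel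
    simp only [Pi.add_apply] at hlevel
    rw [lintegral_add_left hfm, lintegral_const_mul _ hκm,
      ENNReal.add_le_add_iff_left hint,
      ENNReal.mul_le_mul_iff_right (by exact_mod_cast hr.ne') ENNReal.coe_ne_top] at hlevel
    rwa [lintegral_add_left hDm, lintegral_const_mul _ hIm,
      lintegral_indicator_one hKmeas] at hlevel
  refine ENNReal.le_of_forall_pos_le_add fun ε hε _ => ?_
  obtain ⟨κ, hκ, hκε⟩ := ENNReal.exists_nnreal_pos_mul_lt hKfin (ENNReal.coe_pos.2 hε).ne'
  exact (happrox κ hκ).trans (by gcongr)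

end Sobolev

section SuperlevelSets

variable {α : Type*} [MeasurableSpace α] {μ : Measure α} {f : α → ℝ≥0∞} {F : ℕ → α → ℝ≥0∞} {p : ℝ}

lemma meas_lt_le_liminf_of_tendsto (hF : ∀ n, Measurable (F n)) (hf : Measurable f)
    (hlim : ∀ᵐ x ∂μ, Tendsto (fun n => F n x) atTop (𝓝 (f x))) (a : ℝ≥0∞) :
    μ {x | a < f x} ≤ liminf (fun n => μ {x | a < F n x}) atTop := by
  have hmeas {k : α → ℝ≥0∞} (hk : Measurable k) : MeasurableSet {x | a < k x} :=
    measurableSet_lt measurable_const hk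
  rw [← lintegral_indicator_one (hmeas hf)]
  simp only [← lintegral_indicator_one (hmeas (hF _))]
  refine (lintegral_mono_ae ?_).trans
    (lintegral_liminf_le fun n => measurable_one.indicator (hmeas (hF n)))
  filter_upwards [hlim] with x hx
  by_cases hax : a < f x
  · refine le_liminf_of_le (by isBoundedDefault) ?_
    filter_upwards [hx.eventually_const_lt hax] with n hn
    simp [hax, hn]
  · simp [hax]

lemma lintegral_meas_rpow_le_liminf (hp : 0 < p) (hF : ∀ n, Measurable (F n)) (hf : Measurable f)
    (hlim : ∀ᵐ x ∂μ, Tendsto (fun n => F n x) atTop (𝓝 (f x))) :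
    ∫⁻ s in Ioi (0 : ℝ), μ {x | ENNReal.ofReal s < f x} ^ p ≤
      liminf (fun n => ∫⁻ s in Ioi (0 : ℝ), μ {x | ENNReal.ofReal s < F n x} ^ p) atTop := by
  refine le_trans (lintegral_mono fun s => ?_)
    (lintegral_liminf_le fun n => (measurable_meas_ofReal_lt (F n)).pow_const p)
  calc μ {x | ENNReal.ofReal s < f x} ^ p
      ≤ liminf (fun n => μ {x | ENNReal.ofReal s < F n x}) atTop ^ p :=
        ENNReal.rpow_le_rpow (meas_lt_le_liminf_of_tendsto hF hf hlim _) hp.le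
    _ = liminf (fun n => μ {x | ENNReal.ofReal s < F n x} ^ p) atTop :=
        (ENNReal.orderIsoRpow p hp).liminf_apply

lemma lintegral_rpow_le_lintegral_meas_rpow [SFinite μ] (hp : p ∈ Ioc 0 1) (hf : Measurable f)
    (hf1 : ∀ x, f x ≠ 0 → 1 ≤ f x) (hfint : ∫⁻ x, f x ∂μ ≠ ⊤) :
    (∫⁻ x, f x ∂μ) ^ p ≤ ∫⁻ s in Ioi (0 : ℝ), μ {x | ENNReal.ofReal s < f x} ^ p := by
  have h1p : 0 ≤ 1 - p := sub_nonneg.2 hp.2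
  set I := ∫⁻ x, f x ∂μ with hI
  rcases eq_or_ne I 0 with hI0 | hI0
  · simp [hI0, ENNReal.zero_rpow_of_pos hp.1]
  set m : ℝ → ℝ≥0∞ := fun s => μ {x | ENNReal.ofReal s < f x}
  have hm_le (s : ℝ) : m s ≤ I :=
    calc m s ≤ μ {x | 1 ≤ f x} := measure_mono fun x hx => hf1 x (pos_of_gt hx.out).ne'
      _ ≤ I := by simpa using mul_meas_ge_le_lintegral hf 1
  have hsplit (a : ℝ≥0∞) : a = a ^ (1 - p) * a ^ p := by
    rw [← ENNReal.rpow_add_of_nonneg _ _ h1p hp.1.le, sub_add_cancel, ENNReal.rpow_one]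
  have hcomp : I ^ (1 - p) * I ^ p ≤ I ^ (1 - p) * ∫⁻ s in Ioi (0 : ℝ), m s ^ p :=
    calc I ^ (1 - p) * I ^ p = ∫⁻ s in Ioi (0 : ℝ), m s := by
          rw [← hsplit, hI, lintegral_eq_setLIntegral_Ioi_meas_ofReal_lt hf]
      _ ≤ ∫⁻ s in Ioi (0 : ℝ), I ^ (1 - p) * m s ^ p := lintegral_mono fun s =>
          (hsplit (m s)).le.trans (by gcongr; exact hm_le s)
      _ = I ^ (1 - p) * ∫⁻ s in Ioi (0 : ℝ), m s ^ p :=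
          lintegral_const_mul _ ((measurable_meas_ofReal_lt f).pow_const p)
  rwa [ENNReal.mul_le_mul_iff_right (by simp [ENNReal.rpow_eq_zero_iff, hI0, hfint])
    (ENNReal.rpow_ne_top_of_nonneg h1p hfint)] at hcomp

end SuperlevelSets

section BoundedVariation

open scoped Convolution

variable {E : Type*} [NormedAddCommGroup E] [NormedSpace ℝ E] [MeasurableSpace E]

/-- The distributional gradient of `w` (with respect to the reference measure `μ`) is dominated,
as a vector measure, by `ρ`. This is the form in which bounded variation enters below: it is tested
only against nonnegative smooth functions and constant directions. -/
def VariationLE (μ : Measure E) (w : E → ℝ) (ρ : Measure E) : Prop :=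
  ∀ ⦃η : E → ℝ⦄, ContDiff ℝ ∞ η → HasCompactSupport η → (∀ x, 0 ≤ η x) →
    ∀ v, |∫ x, w x * fderiv ℝ η x v ∂μ| ≤ ‖v‖ * ∫ x, η x ∂ρ

variable [FiniteDimensional ℝ E] [BorelSpace E] {μ ρ : Measure E} [μ.IsAddHaarMeasure]
  {w η : E → ℝ}

lemma fderiv_convolution_lsmul_apply (hw : LocallyIntegrable w μ) (hη : ContDiff ℝ 1 η)
    (hηc : HasCompactSupport η) (z v : E) :
    fderiv ℝ (η ⋆[ContinuousLinearMap.lsmul ℝ ℝ, μ] w) z v =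
      ∫ t, w t * fderiv ℝ η (z - t) v ∂μ := by
  rw [(hηc.hasFDerivAt_convolution_left (ContinuousLinearMap.lsmul ℝ ℝ) hη hw z).fderiv]
  have hexists := (hηc.fderiv ℝ).convolutionExists_left
    ((ContinuousLinearMap.lsmul ℝ ℝ : ℝ →L[ℝ] ℝ →L[ℝ] ℝ).precompL E)
    (hη.continuous_fderiv one_ne_zero) hw z
  rw [convolution, ContinuousLinearMap.integral_apply hexists,
    ← integral_sub_left_eq_self (fun t => w t * fderiv ℝ η (z - t) v) μ z]
  exact integral_congr_ae <| ae_of_all _ fun t => by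
    simp only [ContinuousLinearMap.precompL_apply, ContinuousLinearMap.lsmul_apply, smul_eq_mul,
      sub_sub_cancel, mul_comm]

namespace VariationLE

lemma norm_fderiv_convolution_le (hρ : VariationLE μ w ρ) (hw : LocallyIntegrable w μ)
    (hη : ContDiff ℝ ∞ η) (hηc : HasCompactSupport η) (hη0 : ∀ x, 0 ≤ η x) (z : E) :
    ‖fderiv ℝ (η ⋆[ContinuousLinearMap.lsmul ℝ ℝ, μ] w) z‖ ≤ ∫ t, η (z - t) ∂ρ := by
  refine ContinuousLinearMap.opNorm_le_bound _ (integral_nonneg fun t => hη0 _) fun v => ?_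
  have hfderiv (t : E) : fderiv ℝ (fun t => η (z - t)) t v = -fderiv ℝ η (z - t) v := by
    have hcomp : HasFDerivAt (fun t => η (z - t)) _ t :=
      (hη.differentiable (by simp) (z - t)).hasFDerivAt.comp t ((hasFDerivAt_id t).const_sub z)
    rw [hcomp.fderiv]
    simp
  have htest := hρ (η := fun t => η (z - t)) (hη.comp (contDiff_const.sub contDiff_id))
    (hηc.comp_homeomorph (Homeomorph.subLeft z)) (fun t => hη0 _) v
  simp only [hfderiv, mul_neg, integral_neg, abs_neg] at htest
  rwa [fderiv_convolution_lsmul_apply hw (hη.of_le (by simp)) hηc, Real.norm_eq_abs, mul_comm]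

lemma lintegral_enorm_fderiv_convolution_le [IsFiniteMeasure ρ] (hρ : VariationLE μ w ρ)
    (hw : LocallyIntegrable w μ) (hη : ContDiff ℝ ∞ η) (hηc : HasCompactSupport η)
    (hη0 : ∀ x, 0 ≤ η x) (hη1 : ∫ x, η x ∂μ = 1) :
    ∫⁻ z, ‖fderiv ℝ (η ⋆[ContinuousLinearMap.lsmul ℝ ℝ, μ] w) z‖ₑ ∂μ ≤ ρ univ := by
  have hcont : Continuous η := hη.continuous
  have hmass (t : E) : ∫⁻ z, ENNReal.ofReal (η (z - t)) ∂μ = 1 := by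
    rw [lintegral_sub_right_eq_self (fun z => ENNReal.ofReal (η z)) t,
      ← ofReal_integral_eq_lintegral_ofReal (hcont.integrable_of_hasCompactSupport hηc)
        (ae_of_all _ hη0), hη1, ENNReal.ofReal_one]
  have hint (z : E) : Integrable (fun t => η (z - t)) ρ :=
    (hcont.comp (continuous_const.sub continuous_id)).integrable_of_hasCompactSupport
      (hηc.comp_homeomorph (Homeomorph.subLeft z))
  calc ∫⁻ z, ‖fderiv ℝ (η ⋆[ContinuousLinearMap.lsmul ℝ ℝ, μ] w) z‖ₑ ∂μ
      ≤ ∫⁻ z, ∫⁻ t, ENNReal.ofReal (η (z - t)) ∂ρ ∂μ := lintegral_mono fun z => by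
        rw [← ofReal_norm,
          ← ofReal_integral_eq_lintegral_ofReal (hint z) (ae_of_all _ fun t => hη0 _)]
        exact ENNReal.ofReal_le_ofReal (hρ.norm_fderiv_convolution_le hw hη hηc hη0 z)
    _ = ∫⁻ t, ∫⁻ z, ENNReal.ofReal (η (z - t)) ∂μ ∂ρ :=
        lintegral_lintegral_swap
          (ENNReal.continuous_ofReal.comp (by fun_prop)).measurable.aemeasurable
    _ = ρ univ := by simp only [hmass, lintegral_one]

end VariationLE

lemma exists_contDiffBump_seq_ae_tendsto (hw : LocallyIntegrable w μ) :
    ∃ φ : ℕ → ContDiffBump (0 : E), ∀ᵐ z ∂μ, Tendsto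
      (fun n => ((φ n).normed μ ⋆[ContinuousLinearMap.lsmul ℝ ℝ, μ] w) z) atTop (𝓝 (w z)) := by
  let φ (n : ℕ) : ContDiffBump (0 : E) :=
    ⟨1 / ((n : ℝ) + 1), 2 / ((n : ℝ) + 1), by positivity, by gcongr; norm_num⟩
  have hrOut : Tendsto (fun n => (φ n).rOut) atTop (𝓝 0) := by
    have hlim := tendsto_one_div_add_atTop_nhds_zero_nat (𝕜 := ℝ).const_mul 2
    rw [mul_zero] at hlim
    exact hlim.congr fun n => mul_one_div 2 _
  have hratio (n : ℕ) : (φ n).rOut ≤ 2 * (φ n).rIn := (mul_one_div 2 _).ge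
  exact ⟨φ, ContDiffBump.ae_convolution_tendsto_right_of_locallyIntegrable (K := 2) hrOut
    (Eventually.of_forall hratio) hw⟩

theorem VariationLE.isoperimetric_inequality [IsFiniteMeasure ρ] {w : E → ℤ}
    (hρ : VariationLE μ (fun x => w x) ρ) (hn : 1 < finrank ℝ E)
    (hw : Integrable (fun x => (w x : ℝ)) μ) (hwm : Measurable w) (hwc : HasCompactSupport w) :
    isoperimetricConst μ * (∫⁻ x, ‖(w x : ℝ)‖ₑ ∂μ) ^ (1 - (finrank ℝ E : ℝ)⁻¹) ≤ ρ univ := by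
  set p := 1 - (finrank ℝ E : ℝ)⁻¹
  have hp : p ∈ Ioc (0 : ℝ) 1 :=
    ⟨sub_pos.2 (inv_lt_one_of_one_lt₀ (by exact_mod_cast hn)), sub_le_self _ (by positivity)⟩
  obtain ⟨φ, hφ⟩ := exists_contDiffBump_seq_ae_tendsto hw.locallyIntegrable
  set f : ℕ → E → ℝ := fun n =>
    (φ n).normed μ ⋆[ContinuousLinearMap.lsmul ℝ ℝ, μ] fun x => (w x : ℝ)
  have hf (n : ℕ) : ContDiff ℝ 1 (f n) := (φ n).hasCompactSupport_normed.contDiff_convolution_left _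
    (φ n).contDiff_normed hw.locallyIntegrable
  have hfc (n : ℕ) : HasCompactSupport (f n) := (φ n).hasCompactSupport_normed.convolution _
    (hwc.comp_left Int.cast_zero)
  have hwn : Measurable fun x => ‖(w x : ℝ)‖ₑ := (measurable_from_top.comp hwm).enorm
  have hw1 (x : E) (hx : ‖(w x : ℝ)‖ₑ ≠ 0) : 1 ≤ ‖(w x : ℝ)‖ₑ := by
    have hx1 : (1 : ℝ) ≤ ‖(w x : ℝ)‖ := by
      rw [Real.norm_eq_abs]
      exact_mod_cast Int.one_le_abs (by simpa using hx)
    rw [← ofReal_norm, ← ENNReal.ofReal_one]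
    exact ENNReal.ofReal_le_ofReal hx1
  have hbound (n : ℕ) : isoperimetricConst μ *
      ∫⁻ s in Ioi (0 : ℝ), μ {x | ENNReal.ofReal s < ‖f n x‖ₑ} ^ p ≤ ρ univ :=
    (isoperimetricConst_mul_lintegral_meas_rpow_le μ hn (hf n) (hfc n)).trans
      (hρ.lintegral_enorm_fderiv_convolution_le hw.locallyIntegrable (φ n).contDiff_normed
        (φ n).hasCompactSupport_normed (φ n).nonneg_normed (φ n).integral_normed)
  calc isoperimetricConst μ * (∫⁻ x, ‖(w x : ℝ)‖ₑ ∂μ) ^ p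
      ≤ isoperimetricConst μ *
          liminf (fun n => ∫⁻ s in Ioi (0 : ℝ), μ {x | ENNReal.ofReal s < ‖f n x‖ₑ} ^ p) atTop := by
        gcongr
        exact (lintegral_rpow_le_lintegral_meas_rpow hp hwn hw1 hw.hasFiniteIntegral.ne).trans
          (lintegral_meas_rpow_le_liminf hp.1 (fun n => (hf n).continuous.enorm.measurable) hwn
            (hφ.mono fun z hz => hz.enorm))
    _ ≤ liminf (fun n => isoperimetricConst μ *
          ∫⁻ s in Ioi (0 : ℝ), μ {x | ENNReal.ofReal s < ‖f n x‖ₑ} ^ p) atTop := by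
        refine le_of_eq_of_le ?_ ENNReal.le_liminf_mul
        rw [liminf_const]
    _ ≤ ρ univ := liminf_le_of_frequently_le' (Frequently.of_forall hbound)

end BoundedVariation

section Multiplicity

variable {α : Type*}

lemma toReal_toENNReal_encard (s : Set α) : (s.encard : ℝ≥0∞).toReal = s.ncard := by
  rcases s.finite_or_infinite with hs | hs
  · rw [← hs.cast_ncard_eq]; simp
  · simp [hs.encard_eq, hs.ncard]

lemma toENNReal_encard_inter_preimage_singleton {β : Type*} {f : α → β} {t : ℕ → Set α}
    (hdisj : Pairwise (Disjoint on t)) (hinj : ∀ n, InjOn f (t n)) (z : β) :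
    (((⋃ n, t n) ∩ f ⁻¹' {z}).encard : ℝ≥0∞) = ∑' n, (f '' t n).indicator 1 z := by
  have hpiece (n : ℕ) :
      ((t n ∩ f ⁻¹' {z}).encard : ℝ≥0∞) = (f '' t n).indicator 1 z := by
    rcases (t n ∩ f ⁻¹' {z}).eq_empty_or_nonempty with hempty | ⟨x, hx, rfl⟩
    · have hz : z ∉ f '' t n := fun ⟨x, hx, hxz⟩ => hempty.subset ⟨hx, hxz⟩
      simp [hempty, hz]
    · have hsingle : t n ∩ f ⁻¹' {f x} = {x} :=
        eq_singleton_iff_unique_mem.2 ⟨⟨hx, rfl⟩, fun y hy => hinj n hy.1 hx hy.2⟩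
      simp [hsingle, mem_image_of_mem f hx]
  let _ : MeasurableSpace α := ⊤
  simp only [← hpiece, ← Measure.count_apply MeasurableSpace.measurableSet_top, iUnion_inter]
  exact measure_iUnion (fun i j hij => (hdisj hij).mono inter_subset_left inter_subset_left)
    fun _ => MeasurableSpace.measurableSet_top

lemma setIntegral_mul_eq_setIntegral_abs_mul_sub [MeasurableSpace α] {μ : Measure α} {S : Set α}
    {d g : α → ℝ} (hd : Measurable d) (hint : IntegrableOn (fun x => |d x| * g x) S μ) :
    ∫ x in S, d x * g x ∂μ =
      ∫ x in {x ∈ S | 0 < d x}, |d x| * g x ∂μ - ∫ x in {x ∈ S | d x < 0}, |d x| * g x ∂μ := by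
  have hpos : MeasurableSet {x | 0 < d x} := measurableSet_lt measurable_const hd
  have hneg : MeasurableSet {x | d x < 0} := measurableSet_lt hd measurable_const
  have hsep (P : α → Prop) : {x ∈ S | P x} = S ∩ {x | P x} := rfl
  rw [hsep, hsep, ← setIntegral_indicator hpos, ← setIntegral_indicator hneg,
    ← integral_sub (hint.indicator hpos) (hint.indicator hneg)]
  refine integral_congr_ae <| ae_of_all _ fun x => ?_
  rcases lt_trichotomy (d x) 0 with h | h | h
  · simp [h, h.le.not_gt, abs_of_neg h]
  · simp [h]
  · simp [h, h.le.not_gt, abs_of_pos h]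

end Multiplicity

section AreaFormula

variable {E : Type*} [NormedAddCommGroup E] [NormedSpace ℝ E]
  {f : E → E} {f' : E → E →L[ℝ] E} {S : Set E}

/-- The degree of `f` on `S`: preimages counted with the sign of `det f'`. Since `ncard` of an
infinite set is `0`, this is meaningful only at points with finitely many regular preimages, which
by the area formula are almost all points as soon as `det f'` is integrable on `S`. -/
noncomputable def signedMultiplicity (f : E → E) (f' : E → E →L[ℝ] E) (S : Set E) (z : E) : ℤ :=
  ({x ∈ S | 0 < (f' x).det} ∩ f ⁻¹' {z}).ncard - ({x ∈ S | (f' x).det < 0} ∩ f ⁻¹' {z}).ncard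

lemma support_signedMultiplicity_subset :
    Function.support (signedMultiplicity f f' S) ⊆ f '' S := by
  intro z hz
  by_contra hzS
  have hempty (P : E → Prop) : {x ∈ S | P x} ∩ f ⁻¹' {z} = ∅ :=
    eq_empty_of_forall_notMem fun x hx => hzS ⟨x, hx.1.1, hx.2⟩
  exact hz (by simp [signedMultiplicity, hempty])

variable [FiniteDimensional ℝ E] [MeasurableSpace E] [BorelSpace E] {μ : Measure E}
  [μ.IsAddHaarMeasure]

lemma exists_partition_injOn_of_det_ne_zero (hS : MeasurableSet S)
    (hf : ∀ x ∈ S, HasFDerivWithinAt f (f' x) S x) (hdet : ∀ x ∈ S, (f' x).det ≠ 0) :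
    ∃ t : ℕ → Set E, Pairwise (Disjoint on t) ∧ (∀ n, MeasurableSet (t n)) ∧ ⋃ n, t n = S ∧
      ∀ n, InjOn f (t n) := by
  have hexists (A : E →L[ℝ] E) : ∃ r : ℝ≥0, r ≠ 0 ∧
      (A.det ≠ 0 → ∀ s, ApproximatesLinearOn f A s r → InjOn f s) := by
    by_cases hA : A.det = 0
    · exact ⟨1, one_ne_zero, fun h => absurd hA h⟩
    · set e := A.toContinuousLinearEquivOfDetNeZero hA
      have he : ‖(e.symm : E →L[ℝ] E)‖₊⁻¹ ≠ 0 ∨ Subsingleton E := by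
        rcases e.subsingleton_or_nnnorm_symm_pos with h | h
        exacts [Or.inr h, Or.inl (inv_ne_zero h.ne')]
      rcases he with he | hsub
      · exact ⟨_, div_ne_zero he two_ne_zero, fun _ s hs =>
          ApproximatesLinearOn.injOn (f' := e) hs (Or.inr (NNReal.half_lt_self he))⟩
      · exact ⟨1, one_ne_zero, fun _ s _ => Function.injective_of_subsingleton f |>.injOn⟩
  choose r hr0 hr using hexists
  obtain ⟨t, A, hdisj, htm, hcov, happrox, hA⟩ :=
    exists_partition_approximatesLinearOn_of_hasFDerivWithinAt f S f' hf r hr0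
  refine ⟨fun n => S ∩ t n, fun i j hij => (hdisj hij).mono inter_subset_right inter_subset_right,
    fun n => hS.inter (htm n), by rw [← inter_iUnion, inter_eq_left.2 hcov], fun n => ?_⟩
  rcases S.eq_empty_or_nonempty with rfl | hSne
  · simp
  · obtain ⟨y, hy, hAy⟩ := hA hSne n
    exact hr (A n) (hAy ▸ hdet y hy) _ (happrox n)

lemma measurable_toENNReal_encard_inter_preimage_singleton (hS : MeasurableSet S)
    (hf : ∀ x ∈ S, HasFDerivWithinAt f (f' x) S x) (hdet : ∀ x ∈ S, (f' x).det ≠ 0) :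
    Measurable fun z => ((S ∩ f ⁻¹' {z}).encard : ℝ≥0∞) := by
  obtain ⟨t, hdisj, htm, rfl, hinj⟩ := exists_partition_injOn_of_det_ne_zero hS hf hdet
  simp only [toENNReal_encard_inter_preimage_singleton hdisj hinj]
  exact Measurable.tsum fun n => measurable_one.indicator <| measurable_image_of_fderivWithin
    (htm n) (fun x hx => (hf x (mem_iUnion_of_mem n hx)).mono (subset_iUnion t n)) (hinj n)

theorem lintegral_abs_det_fderiv_mul_comp (hS : MeasurableSet S)
    (hf : ∀ x ∈ S, HasFDerivWithinAt f (f' x) S x) (hdet : ∀ x ∈ S, (f' x).det ≠ 0)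
    {g : E → ℝ≥0∞} (hg : Measurable g) :
    ∫⁻ x in S, ENNReal.ofReal |(f' x).det| * g (f x) ∂μ =
      ∫⁻ z, (S ∩ f ⁻¹' {z}).encard * g z ∂μ := by
  obtain ⟨t, hdisj, htm, rfl, hinj⟩ := exists_partition_injOn_of_det_ne_zero hS hf hdet
  have hft (n : ℕ) (x : E) (hx : x ∈ t n) : HasFDerivWithinAt f (f' x) (t n) x :=
    (hf x (mem_iUnion_of_mem n hx)).mono (subset_iUnion t n)
  have himage (n : ℕ) : MeasurableSet (f '' t n) :=
    measurable_image_of_fderivWithin (htm n) (hft n) (hinj n)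
  calc ∫⁻ x in ⋃ n, t n, ENNReal.ofReal |(f' x).det| * g (f x) ∂μ
      = ∑' n, ∫⁻ z in f '' t n, g z ∂μ := by
        simp only [lintegral_iUnion htm hdisj,
          lintegral_image_eq_lintegral_abs_det_fderiv_mul μ (htm _) (hft _) (hinj _)]
    _ = ∫⁻ z, ∑' n, (f '' t n).indicator g z ∂μ := by
        simp only [lintegral_tsum fun n => (hg.indicator (himage n)).aemeasurable,
          lintegral_indicator (himage _)]
    _ = ∫⁻ z, ((⋃ n, t n) ∩ f ⁻¹' {z}).encard * g z ∂μ := by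
        refine lintegral_congr fun z => ?_
        rw [toENNReal_encard_inter_preimage_singleton hdisj hinj, ← ENNReal.tsum_mul_right]
        refine tsum_congr fun n => ?_
        by_cases hz : z ∈ f '' t n <;> simp [hz]

lemma measurable_ncard_inter_preimage_singleton (hS : MeasurableSet S)
    (hf : ∀ x ∈ S, HasFDerivWithinAt f (f' x) S x) (hdet : ∀ x ∈ S, (f' x).det ≠ 0) :
    Measurable fun z => (S ∩ f ⁻¹' {z}).ncard := by
  simpa only [Function.comp_def, toReal_toENNReal_encard, Nat.floor_natCast] using
    (Nat.measurable_floor (R := ℝ)).comp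
      (measurable_toENNReal_encard_inter_preimage_singleton hS hf hdet).ennreal_toReal

lemma lintegral_encard_inter_preimage_singleton_ne_top (hS : MeasurableSet S)
    (hf : ∀ x ∈ S, HasFDerivWithinAt f (f' x) S x) (hdet : ∀ x ∈ S, (f' x).det ≠ 0)
    (hint : IntegrableOn (fun x => (f' x).det) S μ) :
    ∫⁻ z, (S ∩ f ⁻¹' {z}).encard ∂μ ≠ ⊤ := by
  have harea := lintegral_abs_det_fderiv_mul_comp (μ := μ) hS hf hdet measurable_one
  simp only [Pi.one_apply, mul_one] at harea
  rw [← harea]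
  exact hint.abs.lintegral_lt_top.ne

lemma integrable_ncard_inter_preimage_singleton (hS : MeasurableSet S)
    (hf : ∀ x ∈ S, HasFDerivWithinAt f (f' x) S x) (hdet : ∀ x ∈ S, (f' x).det ≠ 0)
    (hint : IntegrableOn (fun x => (f' x).det) S μ) :
    Integrable (fun z => ((S ∩ f ⁻¹' {z}).ncard : ℝ)) μ := by
  simpa only [toReal_toENNReal_encard] using integrable_toReal_of_lintegral_ne_top
    (measurable_toENNReal_encard_inter_preimage_singleton hS hf hdet).aemeasurable
    (lintegral_encard_inter_preimage_singleton_ne_top hS hf hdet hint)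

lemma map_withDensity_abs_det_fderiv (hS : MeasurableSet S)
    (hf : ∀ x ∈ S, HasFDerivWithinAt f (f' x) S x) (hdet : ∀ x ∈ S, (f' x).det ≠ 0) :
    ((μ.restrict S).withDensity fun x => ENNReal.ofReal |(f' x).det|).map f =
      μ.withDensity fun z => ((S ∩ f ⁻¹' {z}).encard : ℝ≥0∞) := by
  have hfm : AEMeasurable f (μ.restrict S) :=
    ContinuousOn.aemeasurable (fun x hx => (hf x hx).continuousWithinAt) hS
  have hdetm : AEMeasurable (fun x => ENNReal.ofReal |(f' x).det|) (μ.restrict S) :=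
    aemeasurable_ofReal_abs_det_fderivWithin μ hS hf
  have hfd : AEMeasurable f ((μ.restrict S).withDensity fun x => ENNReal.ofReal |(f' x).det|) :=
    hfm.mono_ac (withDensity_absolutelyContinuous _ _)
  ext B hB
  have hBf : AEMeasurable (fun x => B.indicator (1 : E → ℝ≥0∞) (f x))
      ((μ.restrict S).withDensity fun x => ENNReal.ofReal |(f' x).det|) :=
    (measurable_one.indicator hB).comp_aemeasurable hfd
  rw [← lintegral_indicator_one hB, lintegral_map' (measurable_one.indicator hB).aemeasurable hfd,
    lintegral_withDensity_eq_lintegral_mul₀' hdetm hBf]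
  refine (lintegral_abs_det_fderiv_mul_comp hS hf hdet (measurable_one.indicator hB)).trans ?_
  rw [withDensity_apply _ hB, ← lintegral_indicator hB]
  exact lintegral_congr fun z => by by_cases hz : z ∈ B <;> simp [hz]

lemma setIntegral_abs_det_fderiv_mul_comp (hS : MeasurableSet S)
    (hf : ∀ x ∈ S, HasFDerivWithinAt f (f' x) S x) (hdet : ∀ x ∈ S, (f' x).det ≠ 0)
    (hint : IntegrableOn (fun x => (f' x).det) S μ) {φ : E → ℝ} (hφ : Measurable φ) :
    ∫ x in S, |(f' x).det| * φ (f x) ∂μ = ∫ z, (S ∩ f ⁻¹' {z}).ncard * φ z ∂μ := by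
  have hNm := measurable_toENNReal_encard_inter_preimage_singleton hS hf hdet
  have hNfin := lintegral_encard_inter_preimage_singleton_ne_top hS hf hdet hint
  have hfm : AEMeasurable f (μ.restrict S) :=
    ContinuousOn.aemeasurable (fun x hx => (hf x hx).continuousWithinAt) hS
  calc ∫ x in S, |(f' x).det| * φ (f x) ∂μ
      = ∫ x, φ (f x) ∂(μ.restrict S).withDensity fun x => ENNReal.ofReal |(f' x).det| := by
        rw [integral_withDensity_eq_integral_toReal_smul₀
          (aemeasurable_ofReal_abs_det_fderivWithin μ hS hf) (by simp)]
        simp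
    _ = ∫ z, φ z ∂μ.withDensity fun z => ((S ∩ f ⁻¹' {z}).encard : ℝ≥0∞) := by
        rw [← map_withDensity_abs_det_fderiv hS hf hdet, integral_map
          (hfm.mono_ac (withDensity_absolutelyContinuous _ _)) hφ.aestronglyMeasurable]
    _ = ∫ z, (S ∩ f ⁻¹' {z}).ncard * φ z ∂μ := by
        rw [integral_withDensity_eq_integral_toReal_smul hNm (ae_lt_top hNm hNfin)]
        simp only [toReal_toENNReal_encard, smul_eq_mul]

lemma measurable_signedMultiplicity (hS : MeasurableSet S)
    (hf : ∀ x ∈ S, HasFDerivWithinAt f (f' x) S x) (hdetm : Measurable fun x => (f' x).det) :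
    Measurable (signedMultiplicity f f' S) :=
  (measurable_from_nat.comp <| measurable_ncard_inter_preimage_singleton
    (hS.inter (measurableSet_lt measurable_const hdetm))
    (fun x hx => (hf x hx.1).mono (sep_subset _ _)) fun _ hx => hx.2.ne').sub
  (measurable_from_nat.comp <| measurable_ncard_inter_preimage_singleton
    (hS.inter (measurableSet_lt hdetm measurable_const))
    (fun x hx => (hf x hx.1).mono (sep_subset _ _)) fun _ hx => hx.2.ne)

lemma integrable_signedMultiplicity (hS : MeasurableSet S)
    (hf : ∀ x ∈ S, HasFDerivWithinAt f (f' x) S x) (hdetm : Measurable fun x => (f' x).det)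
    (hint : IntegrableOn (fun x => (f' x).det) S μ) :
    Integrable (fun z => (signedMultiplicity f f' S z : ℝ)) μ := by
  simp only [signedMultiplicity, Int.cast_sub, Int.cast_natCast]
  exact (integrable_ncard_inter_preimage_singleton
      (hS.inter (measurableSet_lt measurable_const hdetm))
      (fun x hx => (hf x hx.1).mono (sep_subset _ _)) (fun _ hx => hx.2.ne')
      (hint.mono_set (sep_subset _ _))).sub
    (integrable_ncard_inter_preimage_singleton
      (hS.inter (measurableSet_lt hdetm measurable_const))
      (fun x hx => (hf x hx.1).mono (sep_subset _ _)) (fun _ hx => hx.2.ne)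
      (hint.mono_set (sep_subset _ _)))

theorem setIntegral_det_fderiv_mul_comp (hS : MeasurableSet S)
    (hf : ∀ x ∈ S, HasFDerivWithinAt f (f' x) S x) (hdetm : Measurable fun x => (f' x).det)
    (hint : IntegrableOn (fun x => (f' x).det) S μ) {φ : E → ℝ} (hφ : Measurable φ) {M : ℝ}
    (hM : ∀ z, ‖φ z‖ ≤ M) :
    ∫ x in S, (f' x).det * φ (f x) ∂μ = ∫ z, signedMultiplicity f f' S z * φ z ∂μ := by
  have hfm : AEMeasurable f (μ.restrict S) :=
    ContinuousOn.aemeasurable (fun x hx => (hf x hx).continuousWithinAt) hS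
  have hSpos : MeasurableSet {x ∈ S | 0 < (f' x).det} :=
    hS.inter (measurableSet_lt measurable_const hdetm)
  have hSneg : MeasurableSet {x ∈ S | (f' x).det < 0} :=
    hS.inter (measurableSet_lt hdetm measurable_const)
  have hfsub (P : E → Prop) (x : E) (hx : x ∈ {x ∈ S | P x}) :
      HasFDerivWithinAt f (f' x) {x ∈ S | P x} x := (hf x hx.1).mono (sep_subset _ _)
  have hintsub (P : E → Prop) : IntegrableOn (fun x => (f' x).det) {x ∈ S | P x} μ :=
    hint.mono_set (sep_subset _ _)
  have hmul {v : E → ℝ} (hv : Integrable v μ) : Integrable (fun z => v z * φ z) μ :=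
    hv.mul_bdd hφ.aestronglyMeasurable (ae_of_all _ hM)
  have hintφ : IntegrableOn (fun x => |(f' x).det| * φ (f x)) S μ :=
    hint.abs.mul_bdd (hφ.comp_aemeasurable hfm).aestronglyMeasurable (ae_of_all _ fun x => hM _)
  rw [setIntegral_mul_eq_setIntegral_abs_mul_sub hdetm hintφ,
    setIntegral_abs_det_fderiv_mul_comp hSpos (hfsub _) (fun x hx => hx.2.ne') (hintsub _) hφ,
    setIntegral_abs_det_fderiv_mul_comp hSneg (hfsub _) (fun x hx => hx.2.ne) (hintsub _) hφ,
    ← integral_sub (hmul (integrable_ncard_inter_preimage_singleton hSpos (hfsub _)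
        (fun x hx => hx.2.ne') (hintsub _)))
      (hmul (integrable_ncard_inter_preimage_singleton hSneg (hfsub _)
        (fun x hx => hx.2.ne) (hintsub _)))]
  simp only [signedMultiplicity, Int.cast_sub, Int.cast_natCast, sub_mul]

end AreaFormula

section IntegrationByParts

variable {G F : Type*} [NormedAddCommGroup G] [NormedSpace ℝ G] [NormedAddCommGroup F]
  [NormedSpace ℝ F] {u : G → F} (B : F →L[ℝ] F →L[ℝ] ℝ)

lemma fderiv_bilin_fderiv_add_eq (hB : ∀ a b, B a b = -B b a) (hu : ContDiff ℝ 2 u) (p e₁ e₂ : G) :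
    fderiv ℝ (fun q => B (fderiv ℝ u q e₂) (u q)) p e₁ +
        fderiv ℝ (fun q => B (u q) (fderiv ℝ u q e₁)) p e₂ =
      -2 * B (fderiv ℝ u p e₁) (fderiv ℝ u p e₂) := by
  have hud : DifferentiableAt ℝ u p := hu.differentiable (by simp) p
  have hdud (e : G) : HasFDerivAt (fun q => fderiv ℝ u q e) ((fderiv ℝ (fderiv ℝ u) p).flip e) p :=
    ((hu.fderiv_right (m := 1) (by norm_num)).differentiable one_ne_zero p).hasFDerivAt.clm_apply
      (hasFDerivAt_const e p) |>.congr_fderiv (by ext; simp)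
  have hsymm : fderiv ℝ (fderiv ℝ u) p e₁ e₂ = fderiv ℝ (fderiv ℝ u) p e₂ e₁ :=
    hu.contDiffAt.isSymmSndFDerivAt (by simp) e₁ e₂
  rw [(B.hasFDerivAt_of_bilinear (hdud e₂) hud.hasFDerivAt).fderiv,
    (B.hasFDerivAt_of_bilinear hud.hasFDerivAt (hdud e₁)).fderiv]
  simp only [_root_.add_apply, ContinuousLinearMap.precompR_apply,
    ContinuousLinearMap.precompL_apply, ContinuousLinearMap.compL_apply,
    ContinuousLinearMap.comp_apply, ContinuousLinearMap.flip_apply]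
  linarith [hB (fderiv ℝ u p e₁) (fderiv ℝ u p e₂), hB (u p) (fderiv ℝ (fderiv ℝ u) p e₁ e₂),
    congrArg (B (u p)) hsymm]

variable [MeasurableSpace G] [BorelSpace G] {μ : Measure G}

lemma integrable_mul_fderiv_apply [IsFiniteMeasureOnCompacts μ] {α ψ : G → ℝ}
    (hα : Continuous α) (hαc : HasCompactSupport α) (hψ : ContDiff ℝ 1 ψ) (e : G) :
    Integrable (fun p => α p * fderiv ℝ ψ p e) μ :=
  (hα.mul ((hψ.continuous_fderiv one_ne_zero).clm_apply
    continuous_const)).integrable_of_hasCompactSupport hαc.mul_right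

lemma integrable_bilin_fderiv_mul_fderiv [IsFiniteMeasureOnCompacts μ] (hu : ContDiff ℝ 1 u)
    (huc : HasCompactSupport u) {ψ : G → ℝ} (hψ : ContDiff ℝ 1 ψ) (e₁ e₂ : G) :
    Integrable (fun p => B (fderiv ℝ u p e₂) (u p) * fderiv ℝ ψ p e₁ +
      B (u p) (fderiv ℝ u p e₁) * fderiv ℝ ψ p e₂) μ := by
  have (e : G) : Continuous fun p => fderiv ℝ u p e :=
    (hu.continuous_fderiv one_ne_zero).clm_apply continuous_const
  have huo := hu.continuous
  exact (integrable_mul_fderiv_apply (by fun_prop)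
    (huc.mono fun p hp h => hp (by simp [h])) hψ e₁).add
    (integrable_mul_fderiv_apply (by fun_prop) (huc.mono fun p hp h => hp (by simp [h])) hψ e₂)

variable [FiniteDimensional ℝ G] [μ.IsAddHaarMeasure]

lemma integral_mul_fderiv_eq_neg_fderiv_mul_of_hasCompactSupport {α ψ : G → ℝ}
    (hα : ContDiff ℝ 1 α) (hαc : HasCompactSupport α) (hψ : ContDiff ℝ 1 ψ) (e : G) :
    ∫ p, α p * fderiv ℝ ψ p e ∂μ = -∫ p, fderiv ℝ α p e * ψ p ∂μ :=
  integral_mul_fderiv_eq_neg_fderiv_mul_of_integrable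
    ((((hα.continuous_fderiv one_ne_zero).clm_apply continuous_const).mul
      hψ.continuous).integrable_of_hasCompactSupport (hαc.fderiv_apply ℝ e).mul_right)
    (integrable_mul_fderiv_apply hα.continuous hαc hψ e)
    ((hα.continuous.mul hψ.continuous).integrable_of_hasCompactSupport hαc.mul_right)
    (fun p _ => hα.differentiable one_ne_zero p) (fun p _ => hψ.differentiable one_ne_zero p)

lemma integral_bilin_fderiv_mul_fderiv (hB : ∀ a b, B a b = -B b a) (hu : ContDiff ℝ 2 u)
    (huc : HasCompactSupport u) {ψ : G → ℝ} (hψ : ContDiff ℝ 1 ψ) (e₁ e₂ : G) :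
    ∫ p, (B (fderiv ℝ u p e₂) (u p) * fderiv ℝ ψ p e₁ +
        B (u p) (fderiv ℝ u p e₁) * fderiv ℝ ψ p e₂) ∂μ =
      2 * ∫ p, B (fderiv ℝ u p e₁) (fderiv ℝ u p e₂) * ψ p ∂μ := by
  have hdu (e : G) : ContDiff ℝ 1 fun p => fderiv ℝ u p e :=
    (hu.fderiv_right (m := 1) (by norm_num)).clm_apply contDiff_const
  have hα : ContDiff ℝ 1 fun p => B (fderiv ℝ u p e₂) (u p) :=
    (B.contDiff.comp (hdu e₂)).clm_apply (hu.of_le (by norm_num))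
  have hβ : ContDiff ℝ 1 fun p => B (u p) (fderiv ℝ u p e₁) :=
    (B.contDiff.comp (hu.of_le (by norm_num))).clm_apply (hdu e₁)
  have hαc : HasCompactSupport fun p => B (fderiv ℝ u p e₂) (u p) :=
    huc.mono fun p hp h => hp (by simp [h])
  have hβc : HasCompactSupport fun p => B (u p) (fderiv ℝ u p e₁) :=
    huc.mono fun p hp h => hp (by simp [h])
  have hint {γ : G → ℝ} (hγ : ContDiff ℝ 1 γ) (hγc : HasCompactSupport γ) (e : G) :
      Integrable (fun p => fderiv ℝ γ p e * ψ p) μ :=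
    (((hγ.continuous_fderiv one_ne_zero).clm_apply continuous_const).mul
      hψ.continuous).integrable_of_hasCompactSupport (hγc.fderiv_apply ℝ e).mul_right
  rw [integral_add (integrable_mul_fderiv_apply hα.continuous hαc hψ e₁)
      (integrable_mul_fderiv_apply hβ.continuous hβc hψ e₂),
    integral_mul_fderiv_eq_neg_fderiv_mul_of_hasCompactSupport hα hαc hψ,
    integral_mul_fderiv_eq_neg_fderiv_mul_of_hasCompactSupport hβ hβc hψ, ← neg_add,
    ← integral_add (hint hα hαc e₁) (hint hβ hβc e₂), ← integral_neg, ← integral_const_mul]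
  congr 1 with p
  linear_combination -ψ p * fderiv_bilin_fderiv_add_eq B hB hu p e₁ e₂

end IntegrationByParts

/-- The bilinear form `(a, b) ↦ v · (a × b)` on `ℝ³`, as a continuous bilinear map so that the
calculus of bilinear maps applies to it. -/
noncomputable def crossForm (v : Fin 3 → ℝ) : (Fin 3 → ℝ) →L[ℝ] (Fin 3 → ℝ) →L[ℝ] ℝ :=
  (crossProduct.compr₂ (dotProductBilin ℝ ℝ v)).toContinuousBilinearMap

lemma crossForm_apply (v a b : Fin 3 → ℝ) : crossForm v a b = v ⬝ᵥ a ⨯₃ b := rfl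

lemma crossForm_swap (v a b : Fin 3 → ℝ) : crossForm v a b = -crossForm v b a := by
  rw [crossForm_apply, crossForm_apply, ← cross_anticomm, dotProduct_neg]

-- Cramer's rule for expressing `v` in terms of `x`, `a` and `b`.
lemma crossForm_smul_eq (v x a b : Fin 3 → ℝ) :
    crossForm x a b • v =
      crossForm v a b • x + (crossForm v b x • a + crossForm v x a • b) := by
  ext i
  fin_cases i <;>
    simp [crossForm_apply, cross_apply, dotProduct, Fin.sum_univ_three] <;> ring

lemma continuous_crossForm {X : Type*} [TopologicalSpace X] {v a b : X → Fin 3 → ℝ}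
    (hv : Continuous v) (ha : Continuous a) (hb : Continuous b) :
    Continuous fun p => crossForm (v p) (a p) (b p) := by
  simp only [crossForm_apply, cross_apply, dotProduct, Fin.sum_univ_three, Matrix.cons_val]
  fun_prop

section ConeFlux

variable {G : Type*} [NormedAddCommGroup G] [NormedSpace ℝ G] {u : G → Fin 3 → ℝ}
  {φ : (Fin 3 → ℝ) → ℝ}

lemma hasDerivAt_sq_mul_comp_smul (hφ : ContDiff ℝ 1 φ) (x : Fin 3 → ℝ) (s : ℝ) :
    HasDerivAt (fun t => t ^ 2 * φ (t • x))
      (s ^ 2 * fderiv ℝ φ (s • x) x + 2 * s * φ (s • x)) s := by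
  have hline : HasDerivAt (fun t : ℝ => t • x) x s := by
    simpa using (hasDerivAt_id s).smul_const x
  exact ((hasDerivAt_pow 2 s).mul ((hφ.differentiable one_ne_zero
    (s • x)).hasFDerivAt.comp_hasDerivAt s hline)).congr_deriv
      (by rw [Function.comp_apply]; push_cast; ring)

lemma setIntegral_deriv_sq_mul_comp_smul (hφ : ContDiff ℝ 1 φ) (x : Fin 3 → ℝ) :
    ∫ s in Ioc (0 : ℝ) 1, deriv (fun t => t ^ 2 * φ (t • x)) s = φ x := by
  have hderiv := hasDerivAt_sq_mul_comp_smul hφ x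
  rw [← intervalIntegral.integral_of_le zero_le_one,
    intervalIntegral.integral_deriv_eq_sub fun s _ => (hderiv s).differentiableAt]
  · simp
  · have : Continuous (fderiv ℝ φ) := hφ.continuous_fderiv one_ne_zero
    have hφo := hφ.continuous
    simp only [funext fun s => (hderiv s).deriv]
    exact Continuous.intervalIntegrable (by fun_prop) _ _

lemma fderiv_comp_smul_apply (hφ : ContDiff ℝ 1 φ) (hu : ContDiff ℝ 1 u) (s : ℝ) (p e : G) :
    fderiv ℝ (fun q => φ (s • u q)) p e = s * fderiv ℝ φ (s • u p) (fderiv ℝ u p e) := by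
  have hsu : HasFDerivAt (fun q => s • u q) (s • fderiv ℝ u p) p :=
    (hu.differentiable one_ne_zero p).hasFDerivAt.const_smul s
  have hcomp : HasFDerivAt (fun q => φ (s • u q)) _ p :=
    (hφ.differentiable one_ne_zero (s • u p)).hasFDerivAt.comp p hsu
  simp [hcomp.fderiv]

lemma hasCompactSupport_crossForm_fderiv (huc : HasCompactSupport u) (v : G → Fin 3 → ℝ)
    (e₁ e₂ : G) :
    HasCompactSupport fun p => crossForm (v p) (fderiv ℝ u p e₁) (fderiv ℝ u p e₂) :=
  (huc.fderiv_apply ℝ e₁).mono fun p hp h => hp (by simp [h])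

lemma continuous_crossForm_fderiv (hu : ContDiff ℝ 1 u) {v : G → Fin 3 → ℝ} (hv : Continuous v)
    (e₁ e₂ : G) :
    Continuous fun p => crossForm (v p) (fderiv ℝ u p e₁) (fderiv ℝ u p e₂) :=
  continuous_crossForm hv ((hu.continuous_fderiv one_ne_zero).clm_apply continuous_const)
    ((hu.continuous_fderiv one_ne_zero).clm_apply continuous_const)

variable [MeasurableSpace G] [BorelSpace G] [FiniteDimensional ℝ G] {μ : Measure G}

lemma integrableOn_Ioc_prod_univ [IsFiniteMeasureOnCompacts μ] {g : ℝ × G → ℝ}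
    (hg : Continuous g) {K : Set G} (hK : IsCompact K) (hgK : ∀ s, ∀ p ∉ K, g (s, p) = 0)
    (a b : ℝ) :
    IntegrableOn g (Ioc a b ×ˢ univ) (volume.prod μ) :=
  (((hg.continuousOn.integrableOn_compact (isCompact_Icc.prod hK)).mono_set
    (prod_mono_left Ioc_subset_Icc_self)).of_forall_sdiff_eq_zero
      (measurableSet_Ioc.prod MeasurableSet.univ) fun z hz => hgK z.1 z.2 fun h => hz.2 ⟨hz.1.1, h⟩)

variable [μ.IsAddHaarMeasure]

lemma integral_crossForm_mul_fderiv_eq_integral_deriv (hu : ContDiff ℝ 2 u)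
    (huc : HasCompactSupport u) (hφ : ContDiff ℝ 1 φ) (v : Fin 3 → ℝ) (e₁ e₂ : G) (s : ℝ) :
    ∫ p, s ^ 2 * crossForm (u p) (fderiv ℝ u p e₁) (fderiv ℝ u p e₂) *
        fderiv ℝ φ (s • u p) v ∂μ =
      ∫ p, crossForm v (fderiv ℝ u p e₁) (fderiv ℝ u p e₂) *
        deriv (fun t => t ^ 2 * φ (t • u p)) s ∂μ := by
  set N := fun p => crossForm v (fderiv ℝ u p e₁) (fderiv ℝ u p e₂)
  have hu1 : ContDiff ℝ 1 u := hu.of_le (by norm_num)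
  have hψ : ContDiff ℝ 1 fun p => φ (s • u p) := hφ.comp (hu1.const_smul s)
  have hparts := integral_bilin_fderiv_mul_fderiv (μ := μ) (crossForm v) (crossForm_swap v) hu huc
    hψ e₁ e₂
  have hpt (p : G) :
      s ^ 2 * crossForm (u p) (fderiv ℝ u p e₁) (fderiv ℝ u p e₂) * fderiv ℝ φ (s • u p) v =
        s ^ 2 * (crossForm v (fderiv ℝ u p e₁) (fderiv ℝ u p e₂) *
          fderiv ℝ φ (s • u p) (u p)) +
        s * (crossForm v (fderiv ℝ u p e₂) (u p) * fderiv ℝ (fun q => φ (s • u q)) p e₁ +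
          crossForm v (u p) (fderiv ℝ u p e₁) * fderiv ℝ (fun q => φ (s • u q)) p e₂) := by
    have hcramer := congrArg (fderiv ℝ φ (s • u p))
      (crossForm_smul_eq v (u p) (fderiv ℝ u p e₁) (fderiv ℝ u p e₂))
    simp only [map_add, map_smul, smul_eq_mul] at hcramer
    rw [fderiv_comp_smul_apply hφ hu1, fderiv_comp_smul_apply hφ hu1]
    linear_combination s ^ 2 * hcramer
  have hNc := continuous_crossForm_fderiv hu1 (continuous_const (y := v)) e₁ e₂
  have hNs := hasCompactSupport_crossForm_fderiv huc (fun _ => v) e₁ e₂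
  have hφ' : Continuous fun p => fderiv ℝ φ (s • u p) (u p) :=
    ((hφ.continuous_fderiv one_ne_zero).comp (hu1.continuous.const_smul s)).clm_apply
      hu1.continuous
  have hint₁ : Integrable (fun p => N p * fderiv ℝ φ (s • u p) (u p)) μ :=
    (hNc.mul hφ').integrable_of_hasCompactSupport hNs.mul_right
  have hint₂ : Integrable (fun p => N p * φ (s • u p)) μ :=
    (hNc.mul hψ.continuous).integrable_of_hasCompactSupport hNs.mul_right
  simp only [hpt]
  rw [integral_add (hint₁.const_mul _)
    ((integrable_bilin_fderiv_mul_fderiv _ hu1 huc hψ e₁ e₂).const_mul s),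
    integral_const_mul, integral_const_mul, hparts, ← integral_const_mul, ← integral_const_mul,
    ← integral_const_mul, ← integral_add (hint₁.const_mul _) ((hint₂.const_mul _).const_mul _)]
  congr 1 with p
  rw [(hasDerivAt_sq_mul_comp_smul hφ _ s).deriv]
  ring

theorem setIntegral_cone_flux (hu : ContDiff ℝ 2 u) (huc : HasCompactSupport u)
    (hφ : ContDiff ℝ 1 φ) (v : Fin 3 → ℝ) (e₁ e₂ : G) :
    ∫ z in Ioc (0 : ℝ) 1 ×ˢ univ, z.1 ^ 2 *
        crossForm (u z.2) (fderiv ℝ u z.2 e₁) (fderiv ℝ u z.2 e₂) *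
        fderiv ℝ φ (z.1 • u z.2) v ∂(volume.prod μ) =
      ∫ p, crossForm v (fderiv ℝ u p e₁) (fderiv ℝ u p e₂) * φ (u p) ∂μ := by
  have hu1 : ContDiff ℝ 1 u := hu.of_le (by norm_num)
  have huo := hu.continuous
  have hNc := continuous_crossForm_fderiv hu1 (continuous_const (y := v)) e₁ e₂
  have hVc := continuous_crossForm_fderiv hu1 huo e₁ e₂
  have : Continuous (fderiv ℝ φ) := hφ.continuous_fderiv one_ne_zero
  have hφo := hφ.continuous
  have hout (p : G) (hp : p ∉ tsupport u) (x : Fin 3 → ℝ) :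
      crossForm x (fderiv ℝ u p e₁) (fderiv ℝ u p e₂) = 0 := by
    simp [fderiv_of_notMem_tsupport (𝕜 := ℝ) hp]
  have hleft : IntegrableOn (fun z : ℝ × G => z.1 ^ 2 *
      crossForm (u z.2) (fderiv ℝ u z.2 e₁) (fderiv ℝ u z.2 e₂) *
        fderiv ℝ φ (z.1 • u z.2) v) (Ioc 0 1 ×ˢ univ) (volume.prod μ) :=
    integrableOn_Ioc_prod_univ
      (((continuous_fst.pow 2).mul (hVc.comp continuous_snd)).mul (by fun_prop))
      huc.isCompact (fun s p hp => by simp [hout p hp]) 0 1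
  have hright : IntegrableOn (fun z : ℝ × G =>
      crossForm v (fderiv ℝ u z.2 e₁) (fderiv ℝ u z.2 e₂) *
        deriv (fun t => t ^ 2 * φ (t • u z.2)) z.1) (Ioc 0 1 ×ˢ univ) (volume.prod μ) := by
    simp only [(hasDerivAt_sq_mul_comp_smul hφ _ _).deriv]
    exact integrableOn_Ioc_prod_univ
      ((hNc.comp continuous_snd).mul (by fun_prop)) huc.isCompact
      (fun s p hp => by simp [hout p hp]) 0 1
  rw [setIntegral_prod _ hleft]
  simp only [Measure.restrict_univ, integral_crossForm_mul_fderiv_eq_integral_deriv hu huc hφ v]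
  rw [IntegrableOn, ← Measure.prod_restrict, Measure.restrict_univ] at hright
  rw [integral_integral_swap hright]
  congr 1 with p
  rw [integral_const_mul, setIntegral_deriv_sq_mul_comp_smul hφ]

end ConeFlux

section Cone

/-- Splitting off the first coordinate of `ℝ³`. -/
def finThreeEquivProd : (Fin 3 → ℝ) ≃ᵐ ℝ × ℝ × ℝ :=
  (MeasurableEquiv.piFinSuccAbove (fun _ => ℝ) 0).trans
    ((MeasurableEquiv.refl ℝ).prodCongr MeasurableEquiv.finTwoArrow)

lemma finThreeEquivProd_apply (x : Fin 3 → ℝ) : finThreeEquivProd x = (x 0, x 1, x 2) := rfl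

lemma volume_preserving_finThreeEquivProd : MeasurePreserving finThreeEquivProd :=
  (volume_preserving_piFinSuccAbove (fun _ => ℝ) 0).trans
    ((MeasurePreserving.id volume).prod (volume_preserving_finTwoArrow ℝ))

/-- The cone with apex `0` over the map `u`, parametrized by the slab `coneSlab`. -/
def cone (u : ℝ × ℝ → Fin 3 → ℝ) (x : Fin 3 → ℝ) : Fin 3 → ℝ := x 0 • u (x 1, x 2)

/-- The parameter domain `(0, 1] × ℝ²` of a cone. -/
def coneSlab : Set (Fin 3 → ℝ) := {x | x 0 ∈ Ioc 0 1}

lemma coneSlab_eq_preimage : coneSlab = finThreeEquivProd ⁻¹' (Ioc 0 1 ×ˢ univ) := by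
  ext x
  simp [coneSlab, finThreeEquivProd_apply]

lemma measurableSet_coneSlab : MeasurableSet coneSlab :=
  measurable_pi_apply 0 measurableSet_Ioc

variable {u : ℝ × ℝ → Fin 3 → ℝ}

/-- The oriented area density `u_x × u_y` of a parametrized surface `u`. -/
noncomputable def areaVector (u : ℝ × ℝ → Fin 3 → ℝ) (p : ℝ × ℝ) : Fin 3 → ℝ :=
  pderivX u p ⨯₃ pderivY u p

lemma hasFDerivAt_cone (hu : Differentiable ℝ u) (x : Fin 3 → ℝ) :
    HasFDerivAt (cone u) (x 0 • (fderiv ℝ u (x 1, x 2)).comp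
      ((ContinuousLinearMap.proj 1).prod (ContinuousLinearMap.proj 2)) +
        (ContinuousLinearMap.proj 0).smulRight (u (x 1, x 2))) x := by
  have hproj : HasFDerivAt (fun y : Fin 3 → ℝ => (y 1, y 2))
      ((ContinuousLinearMap.proj (R := ℝ) (φ := fun _ => ℝ) 1).prod
        (ContinuousLinearMap.proj 2)) x :=
    (hasFDerivAt_apply 1 x).prodMk (hasFDerivAt_apply 2 x)
  exact (hasFDerivAt_apply 0 x).smul ((hu (x 1, x 2)).hasFDerivAt.comp x hproj)

lemma det_fderiv_cone (hu : Differentiable ℝ u) (x : Fin 3 → ℝ) :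
    (fderiv ℝ (cone u) x).det = x 0 ^ 2 * (u (x 1, x 2) ⬝ᵥ areaVector u (x 1, x 2)) := by
  have hzero : fderiv ℝ u (x 1, x 2) (0, 0) = 0 := map_zero _
  rw [(hasFDerivAt_cone hu x).fderiv, ContinuousLinearMap.det, ← LinearMap.det_toMatrix',
    Matrix.det_fin_three]
  simp [LinearMap.toMatrix'_apply, areaVector, pderivX, pderivY, cross_apply, dotProduct, hzero,
    Fin.sum_univ_three]
  ring

lemma crossForm_fderiv (u : ℝ × ℝ → Fin 3 → ℝ) (v : Fin 3 → ℝ) (p : ℝ × ℝ) :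
    crossForm v (fderiv ℝ u p (1, 0)) (fderiv ℝ u p (0, 1)) = v ⬝ᵥ areaVector u p := rfl

lemma continuous_dotProduct_areaVector (hu : ContDiff ℝ 1 u) {v : ℝ × ℝ → Fin 3 → ℝ}
    (hv : Continuous v) : Continuous fun p => v p ⬝ᵥ areaVector u p :=
  continuous_crossForm_fderiv hu hv (1, 0) (0, 1)

lemma measurable_det_fderiv_cone (hu : ContDiff ℝ 1 u) :
    Measurable fun x => (fderiv ℝ (cone u) x).det := by
  have hV := continuous_dotProduct_areaVector hu hu.continuous
  simp only [det_fderiv_cone (hu.differentiable one_ne_zero)]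
  exact (((continuous_apply 0).pow 2).mul
    (hV.comp ((continuous_apply 1).prodMk (continuous_apply 2)))).measurable

lemma setIntegral_coneSlab (g : ℝ × ℝ × ℝ → ℝ) :
    ∫ x in coneSlab, g (x 0, x 1, x 2) = ∫ z in Ioc 0 1 ×ˢ univ, g z :=
  coneSlab_eq_preimage ▸ volume_preserving_finThreeEquivProd.setIntegral_preimage_emb
    finThreeEquivProd.measurableEmbedding g _

lemma integrableOn_sq_mul_dotProduct_areaVector (hu : ContDiff ℝ 1 u)
    (huc : HasCompactSupport u) :
    IntegrableOn (fun z : ℝ × ℝ × ℝ => z.1 ^ 2 * (u z.2 ⬝ᵥ areaVector u z.2))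
      (Ioc 0 1 ×ˢ univ) :=
  integrableOn_Ioc_prod_univ ((continuous_fst.pow 2).mul
    ((continuous_dotProduct_areaVector hu hu.continuous).comp continuous_snd)) huc.isCompact
    (fun s p hp => by simp [image_eq_zero_of_notMem_tsupport hp]) 0 1

lemma integrableOn_det_fderiv_cone (hu : ContDiff ℝ 1 u) (huc : HasCompactSupport u) :
    IntegrableOn (fun x => (fderiv ℝ (cone u) x).det) coneSlab := by
  simp only [det_fderiv_cone (hu.differentiable one_ne_zero), coneSlab_eq_preimage]
  exact (volume_preserving_finThreeEquivProd.integrableOn_comp_preimage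
    finThreeEquivProd.measurableEmbedding).2 (integrableOn_sq_mul_dotProduct_areaVector hu huc)

/-- The number of times the cone over `u` covers a point, counted with orientation: the degree of
the closed surface `u` around that point. -/
noncomputable def coneMultiplicity (u : ℝ × ℝ → Fin 3 → ℝ) : (Fin 3 → ℝ) → ℤ :=
  signedMultiplicity (cone u) (fderiv ℝ (cone u)) coneSlab

lemma hasFDerivWithinAt_cone (hu : ContDiff ℝ 1 u) :
    ∀ x ∈ coneSlab, HasFDerivWithinAt (cone u) (fderiv ℝ (cone u) x) coneSlab x := fun x _ =>
  (hasFDerivAt_cone (hu.differentiable one_ne_zero) x).differentiableAt.hasFDerivAt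
    |>.hasFDerivWithinAt

lemma measurable_coneMultiplicity (hu : ContDiff ℝ 1 u) : Measurable (coneMultiplicity u) :=
  measurable_signedMultiplicity measurableSet_coneSlab (hasFDerivWithinAt_cone hu)
    (measurable_det_fderiv_cone hu)

lemma integrable_coneMultiplicity (hu : ContDiff ℝ 1 u) (huc : HasCompactSupport u) :
    Integrable fun z => (coneMultiplicity u z : ℝ) :=
  integrable_signedMultiplicity measurableSet_coneSlab (hasFDerivWithinAt_cone hu)
    (measurable_det_fderiv_cone hu) (integrableOn_det_fderiv_cone hu huc)

lemma hasCompactSupport_coneMultiplicity (hu : Continuous u) (huc : HasCompactSupport u) :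
    HasCompactSupport (coneMultiplicity u) := by
  refine .of_support_subset_isCompact
    ((isCompact_Icc.prod (huc.isCompact_range hu)).image
      (s := Icc (0 : ℝ) 1 ×ˢ range u) continuous_smul) ?_
  refine support_signedMultiplicity_subset.trans ?_
  rintro _ ⟨x, hx, rfl⟩
  exact ⟨(x 0, u (x 1, x 2)), ⟨Ioc_subset_Icc_self hx, mem_range_self _⟩, rfl⟩

lemma integral_coneMultiplicity_mul (hu : ContDiff ℝ 1 u) (huc : HasCompactSupport u)
    {φ : (Fin 3 → ℝ) → ℝ} (hφ : Measurable φ) {M : ℝ} (hM : ∀ z, ‖φ z‖ ≤ M) :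
    ∫ z, coneMultiplicity u z * φ z =
      ∫ z in Ioc (0 : ℝ) 1 ×ˢ univ, z.1 ^ 2 * (u z.2 ⬝ᵥ areaVector u z.2) * φ (z.1 • u z.2) := by
  rw [coneMultiplicity, ← setIntegral_det_fderiv_mul_comp measurableSet_coneSlab
    (hasFDerivWithinAt_cone hu) (measurable_det_fderiv_cone hu)
    (integrableOn_det_fderiv_cone hu huc) hφ hM]
  simp only [det_fderiv_cone (hu.differentiable one_ne_zero)]
  exact setIntegral_coneSlab fun z =>
    z.1 ^ 2 * (u z.2 ⬝ᵥ areaVector u z.2) * φ (z.1 • u z.2)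

lemma integral_coneMultiplicity (hu : ContDiff ℝ 1 u) (huc : HasCompactSupport u) :
    ∫ z, (coneMultiplicity u z : ℝ) = (∫ p, u p ⬝ᵥ areaVector u p) / 3 := by
  have hcov := integral_coneMultiplicity_mul hu huc (φ := fun _ => 1) measurable_const
    (M := 1) (by simp)
  simp only [mul_one] at hcov
  rw [hcov, Measure.volume_eq_prod, setIntegral_prod_mul (fun s => s ^ 2)
    (fun p => u p ⬝ᵥ areaVector u p), Measure.restrict_univ,
    ← intervalIntegral.integral_of_le zero_le_one, integral_pow]
  ring

theorem integral_coneMultiplicity_mul_fderiv (hu : ContDiff ℝ 2 u) (huc : HasCompactSupport u)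
    {φ : (Fin 3 → ℝ) → ℝ} (hφ : ContDiff ℝ 1 φ) (hφc : HasCompactSupport φ) (v : Fin 3 → ℝ) :
    ∫ z, coneMultiplicity u z * fderiv ℝ φ z v = ∫ p, (v ⬝ᵥ areaVector u p) * φ (u p) := by
  have hφ' : Continuous fun z => fderiv ℝ φ z v :=
    (hφ.continuous_fderiv one_ne_zero).clm_apply continuous_const
  obtain ⟨M, hM⟩ := (hφc.fderiv_apply ℝ v).exists_bound_of_continuous hφ'
  rw [integral_coneMultiplicity_mul (hu.of_le (by norm_num)) huc hφ'.measurable hM]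
  exact setIntegral_cone_flux hu huc hφ v (1, 0) (0, 1)

end Cone

section SurfaceArea

variable {u : ℝ × ℝ → Fin 3 → ℝ}

/-- The area of the surface parametrized by `u`, distributed over its image and counted with
multiplicity; it lives on `EuclideanSpace` because area refers to the Euclidean norm. -/
noncomputable def surfaceMeasure (u : ℝ × ℝ → Fin 3 → ℝ) : Measure (EuclideanSpace ℝ (Fin 3)) :=
  (volume.withDensity fun p => ‖WithLp.toLp 2 (areaVector u p)‖ₑ).map fun p => WithLp.toLp 2 (u p)

lemma continuous_areaVector (hu : ContDiff ℝ 1 u) : Continuous (areaVector u) := by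
  refine continuous_pi fun i => ?_
  simpa using continuous_dotProduct_areaVector hu (continuous_const (y := Pi.single i 1))

lemma continuous_toLp_areaVector (hu : ContDiff ℝ 1 u) :
    Continuous fun p => WithLp.toLp 2 (areaVector u p) :=
  (PiLp.continuous_toLp 2 _).comp (continuous_areaVector hu)

lemma hasCompactSupport_areaVector (huc : HasCompactSupport u) :
    HasCompactSupport (areaVector u) :=
  (huc.fderiv_apply ℝ (1, 0)).mono fun p hp h => hp (by simp [areaVector, pderivX, h])

lemma integrable_toLp_areaVector (hu : ContDiff ℝ 1 u) (huc : HasCompactSupport u) :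
    Integrable fun p => WithLp.toLp 2 (areaVector u p) :=
  (continuous_toLp_areaVector hu).integrable_of_hasCompactSupport
    ((hasCompactSupport_areaVector huc).mono fun p hp h => hp (by simp [h]))

lemma surfaceMeasure_univ (hu : Continuous u) :
    surfaceMeasure u univ = ∫⁻ p, ‖WithLp.toLp 2 (areaVector u p)‖ₑ := by
  have hu2 : Continuous fun p => WithLp.toLp 2 (u p) := (PiLp.continuous_toLp 2 _).comp hu
  rw [surfaceMeasure, Measure.map_apply hu2.measurable .univ, preimage_univ,
    withDensity_apply _ .univ, Measure.restrict_univ]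

lemma integral_surfaceMeasure (hu : ContDiff ℝ 1 u) {η : EuclideanSpace ℝ (Fin 3) → ℝ}
    (hη : Continuous η) :
    ∫ z, η z ∂surfaceMeasure u =
      ∫ p, ‖WithLp.toLp 2 (areaVector u p)‖ * η (WithLp.toLp 2 (u p)) := by
  have hu2 : Continuous fun p => WithLp.toLp 2 (u p) :=
    (PiLp.continuous_toLp 2 _).comp hu.continuous
  rw [surfaceMeasure, integral_map hu2.aemeasurable hη.aestronglyMeasurable]
  exact integral_withDensity_eq_integral_smul (continuous_toLp_areaVector hu).nnnorm.measurable _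

lemma integral_coneMultiplicity_ofLp_mul_fderiv (hu : ContDiff ℝ 2 u) (huc : HasCompactSupport u)
    {η : EuclideanSpace ℝ (Fin 3) → ℝ} (hη : ContDiff ℝ 1 η) (hηc : HasCompactSupport η)
    (v : EuclideanSpace ℝ (Fin 3)) :
    ∫ z, coneMultiplicity u (WithLp.ofLp z) * fderiv ℝ η z v =
      ∫ p, inner ℝ v (WithLp.toLp 2 (areaVector u p)) * η (WithLp.toLp 2 (u p)) := by
  let e := (PiLp.continuousLinearEquiv 2 ℝ fun _ : Fin 3 => ℝ).symm
  have hfderiv (x : Fin 3 → ℝ) :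
      fderiv ℝ (η ∘ e) x (WithLp.ofLp v) = fderiv ℝ η (WithLp.toLp 2 x) v := by
    rw [e.comp_right_fderiv]
    rfl
  rw [← (PiLp.volume_preserving_toLp (Fin 3)).integral_comp
    (MeasurableEquiv.toLp 2 (Fin 3 → ℝ)).measurableEmbedding]
  simp only [← hfderiv]
  refine (integral_coneMultiplicity_mul_fderiv hu huc (hη.comp e.contDiff)
    (hηc.comp_homeomorph e.toHomeomorph) _).trans ?_
  congr 1 with p
  rw [EuclideanSpace.inner_eq_star_dotProduct]
  simp [dotProduct_comm, e]

theorem variationLE_coneMultiplicity (hu : ContDiff ℝ 2 u) (huc : HasCompactSupport u) :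
    VariationLE volume (fun z => coneMultiplicity u (WithLp.ofLp z)) (surfaceMeasure u) := by
  intro η hη hηc hη0 v
  have hu1 : ContDiff ℝ 1 u := hu.of_le (by norm_num)
  rw [integral_coneMultiplicity_ofLp_mul_fderiv hu huc (hη.of_le (by simp)) hηc,
    integral_surfaceMeasure hu1 hη.continuous, ← integral_const_mul, ← Real.norm_eq_abs]
  refine norm_integral_le_of_norm_le (Integrable.const_mul ?_ _) (ae_of_all _ fun p => ?_)
  · exact ((continuous_toLp_areaVector hu1).norm.mul (hη.continuous.comp
      ((PiLp.continuous_toLp 2 _).comp hu1.continuous))).integrable_of_hasCompactSupport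
        ((hasCompactSupport_areaVector huc).mono fun p hp h => hp (by simp [h]))
  · rw [norm_mul, Real.norm_of_nonneg (hη0 _), ← mul_assoc]
    exact mul_le_mul_of_nonneg_right (norm_inner_le_norm _ _) (hη0 _)

lemma isoperimetricConst_euclideanSpace_pow_three :
    isoperimetricConst (volume : Measure (EuclideanSpace ℝ (Fin 3))) ^ 3 =
      ENNReal.ofReal (36 * π) := by
  rw [isoperimetricConst, finrank_euclideanSpace_fin, mul_pow, ← ENNReal.rpow_natCast (_ ^ _),
    ← ENNReal.rpow_mul, EuclideanSpace.volume_ball_fin_three, inv_mul_cancel₀ (by norm_num),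
    ENNReal.rpow_one, ENNReal.ofReal_one, one_pow, one_mul, ← ENNReal.ofReal_natCast,
    ← ENNReal.ofReal_pow (by positivity), ← ENNReal.ofReal_mul (by positivity)]
  congr 1
  ring

lemma pow_three_mul_sq_le_pow_three {I A c : ℝ≥0∞} (h : c * I ^ (1 - (3 : ℝ)⁻¹) ≤ A) :
    c ^ 3 * I ^ 2 ≤ A ^ 3 := by
  calc c ^ 3 * I ^ 2 = (c * I ^ (1 - (3 : ℝ)⁻¹)) ^ 3 := by
        rw [mul_pow, ← ENNReal.rpow_natCast (I ^ _), ← ENNReal.rpow_mul, ← ENNReal.rpow_natCast I]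
        norm_num
    _ ≤ A ^ 3 := by gcongr

theorem isoperimetric_inequality_areaVector (hu : ContDiff ℝ 2 u) (huc : HasCompactSupport u) :
    4 * π * (∫ p, u p ⬝ᵥ areaVector u p) ^ 2 ≤ (∫ p, ‖WithLp.toLp 2 (areaVector u p)‖) ^ 3 := by
  have hu1 : ContDiff ℝ 1 u := hu.of_le (by norm_num)
  have hofLp := PiLp.volume_preserving_ofLp (Fin 3)
  have hint : Integrable fun z : EuclideanSpace ℝ (Fin 3) =>
      (coneMultiplicity u (WithLp.ofLp z) : ℝ) :=
    hofLp.integrable_comp_of_integrable (integrable_coneMultiplicity hu1 huc)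
  have hfin : IsFiniteMeasure (surfaceMeasure u) :=
    ⟨surfaceMeasure_univ hu.continuous ▸ (integrable_toLp_areaVector hu1 huc).2⟩
  have hiso := (variationLE_coneMultiplicity hu huc).isoperimetric_inequality (by simp) hint
    ((measurable_coneMultiplicity hu1).comp hofLp.measurable)
    ((hasCompactSupport_coneMultiplicity hu.continuous huc).comp_homeomorph
      (PiLp.continuousLinearEquiv 2 ℝ fun _ : Fin 3 => ℝ).toHomeomorph)
  rw [surfaceMeasure_univ hu.continuous, finrank_euclideanSpace_fin,
    ← ofReal_integral_norm_eq_lintegral_enorm (integrable_toLp_areaVector hu1 huc)] at hiso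
  have hvolume : ENNReal.ofReal |(∫ p, u p ⬝ᵥ areaVector u p) / 3| ≤
      ∫⁻ z : EuclideanSpace ℝ (Fin 3), ‖(coneMultiplicity u (WithLp.ofLp z) : ℝ)‖ₑ := by
    rw [← integral_coneMultiplicity hu1 huc, ← hofLp.integral_comp
      (MeasurableEquiv.toLp 2 (Fin 3 → ℝ)).symm.measurableEmbedding, ← Real.enorm_eq_ofReal_abs]
    exact enorm_integral_le_lintegral_enorm _
  have hcubed : ENNReal.ofReal (36 * π) *
      ENNReal.ofReal |(∫ p, u p ⬝ᵥ areaVector u p) / 3| ^ 2 ≤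
        ENNReal.ofReal (∫ p, ‖WithLp.toLp 2 (areaVector u p)‖) ^ 3 := by
    rw [← isoperimetricConst_euclideanSpace_pow_three]
    exact (mul_le_mul_right (pow_le_pow_left' hvolume 2) _).trans
      (pow_three_mul_sq_le_pow_three hiso)
  have hA : 0 ≤ ∫ p, ‖WithLp.toLp 2 (areaVector u p)‖ := integral_nonneg fun p => norm_nonneg _
  rw [← ENNReal.ofReal_pow (abs_nonneg _), ← ENNReal.ofReal_mul (by positivity),
    ← ENNReal.ofReal_pow hA, ENNReal.ofReal_le_ofReal_iff (pow_nonneg hA 3), sq_abs] at hcubed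
  linarith

end SurfaceArea

section Energy

variable {Ω : Set (ℝ × ℝ)} {u : ℝ × ℝ → Fin 3 → ℝ}

lemma norm_toLp_cross_le (a b : Fin 3 → ℝ) :
    ‖WithLp.toLp 2 (a ⨯₃ b)‖ ≤ (a ⬝ᵥ a + b ⬝ᵥ b) / 2 := by
  have hself (c : Fin 3 → ℝ) : 0 ≤ c ⬝ᵥ c := Finset.sum_nonneg fun i _ => mul_self_nonneg _
  have hnorm : ‖WithLp.toLp 2 (a ⨯₃ b)‖ ^ 2 = (a ⨯₃ b) ⬝ᵥ (a ⨯₃ b) := by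
    rw [EuclideanSpace.real_norm_sq_eq]
    simp only [dotProduct, sq]
  have hlagrange := cross_dot_cross a b a b
  rw [dotProduct_comm b a] at hlagrange
  refine abs_le_of_sq_le_sq' ?_ (by linarith [hself a, hself b]) |>.2
  rw [hnorm]
  nlinarith [sq_nonneg (a ⬝ᵥ b), sq_nonneg (a ⬝ᵥ a - b ⬝ᵥ b)]

lemma vol_eq_integral (hu : tsupport u ⊆ Ω) : vol Ω u = ∫ p, u p ⬝ᵥ areaVector u p :=
  setIntegral_eq_integral_of_forall_compl_eq_zero fun p hp => by
    rw [image_eq_zero_of_notMem_tsupport fun h => hp (hu h)]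
    exact zero_dotProduct _

lemma dirEnergy_nonneg (Ω : Set (ℝ × ℝ)) (u : ℝ × ℝ → Fin 3 → ℝ) : 0 ≤ dirEnergy Ω u :=
  integral_nonneg fun _ => add_nonneg (Finset.sum_nonneg fun _ _ => mul_self_nonneg _)
    (Finset.sum_nonneg fun _ _ => mul_self_nonneg _)

lemma integral_norm_areaVector_le (hu : ContDiff ℝ 1 u) (huc : HasCompactSupport u)
    (hΩ : tsupport u ⊆ Ω) :
    ∫ p, ‖WithLp.toLp 2 (areaVector u p)‖ ≤ dirEnergy Ω u / 2 := by
  have hX : Continuous (pderivX u) :=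
    (hu.continuous_fderiv one_ne_zero).clm_apply continuous_const
  have hY : Continuous (pderivY u) :=
    (hu.continuous_fderiv one_ne_zero).clm_apply continuous_const
  have hzero (p : ℝ × ℝ) (hp : p ∉ tsupport u) :
      pderivX u p ⬝ᵥ pderivX u p + pderivY u p ⬝ᵥ pderivY u p = 0 := by
    simp [pderivX, pderivY, fderiv_of_notMem_tsupport (𝕜 := ℝ) hp]
  have hint : Integrable fun p => pderivX u p ⬝ᵥ pderivX u p + pderivY u p ⬝ᵥ pderivY u p :=
    ((hX.dotProduct hX).add (hY.dotProduct hY)).integrable_of_hasCompactSupport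
      (.intro huc hzero)
  have henergy : dirEnergy Ω u =
      ∫ p, (pderivX u p ⬝ᵥ pderivX u p + pderivY u p ⬝ᵥ pderivY u p) :=
    setIntegral_eq_integral_of_forall_compl_eq_zero fun p hp => hzero p fun h => hp (hΩ h)
  rw [henergy, ← integral_div]
  exact integral_mono (integrable_toLp_areaVector hu huc).norm (hint.div_const 2)
    fun p => norm_toLp_cross_le _ _

theorem sq_vol_le_dirEnergy_pow_three (hu : ContDiff ℝ 2 u) (huc : HasCompactSupport u)
    (hΩ : tsupport u ⊆ Ω) : 32 * π * vol Ω u ^ 2 ≤ dirEnergy Ω u ^ 3 := by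
  have hisoperimetric := isoperimetric_inequality_areaVector hu huc
  have harea := pow_le_pow_left₀ (integral_nonneg fun p => norm_nonneg _)
    (integral_norm_areaVector_le (hu.of_le (by norm_num)) huc hΩ) 3
  rw [vol_eq_integral hΩ]
  linarith

end Energy

lemma sq_rPW (H δ : ℝ) : rPW H δ ^ 2 = 8 * π * δ ^ 2 / H ^ 2 := by
  rw [rPW, div_pow, mul_pow, mul_pow, Real.sq_sqrt (by positivity)]
  ring

theorem nehari_norm_dichotomy_general (Ω : Set (ℝ × ℝ)) {H : ℝ} (hH : H ≠ 0) (δ : ℝ)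
    {u : ℝ × ℝ → Fin 3 → ℝ} (hu : ContDiff ℝ 2 u) (huc : HasCompactSupport u)
    (hΩ : tsupport u ⊆ Ω) (hD : Dfun Ω H δ u = 0) : rPW H δ ≤ dnorm Ω u ∨ dnorm Ω u = 0 := by
  rcases (dirEnergy_nonneg Ω u).eq_or_lt with hE | hE
  · exact .inr (by rw [dnorm, ← hE, Real.sqrt_zero])
  refine .inl (Real.le_sqrt_of_sq_le ?_)
  rw [sq_rPW, div_le_iff₀ (by positivity)]
  have hnehari : δ * dirEnergy Ω u = -(2 * H * vol Ω u) := eq_neg_of_add_eq_zero_left hD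
  refine le_of_mul_le_mul_right ?_ (pow_pos hE 2)
  calc 8 * π * δ ^ 2 * dirEnergy Ω u ^ 2 = 8 * π * (δ * dirEnergy Ω u) ^ 2 := by ring
    _ = H ^ 2 * (32 * π * vol Ω u ^ 2) := by rw [hnehari]; ring
    _ ≤ H ^ 2 * dirEnergy Ω u ^ 3 := by gcongr; exact sq_vol_le_dirEnergy_pow_three hu huc hΩ
    _ = dirEnergy Ω u * H ^ 2 * dirEnergy Ω u ^ 2 := by ring

/-- If `D_δ(u) = 0` then `‖u‖ ≥ r(δ)` or `‖u‖ = 0`; in particular if `D(u) = 0`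
then `‖u‖ ≥ r(1) = 2√(2π)/H` or `‖u‖ = 0`. -/
theorem nehari_norm_dichotomy (Ω : Set (ℝ × ℝ)) (hΩ : IsOpen Ω)
    (hΩb : Bornology.IsBounded Ω) (H : ℝ) (hH : 0 < H) (δ : ℝ) (hδ : 0 < δ)
    (u : ℝ × ℝ → Fin 3 → ℝ) (hu : IsAdmissible Ω u) :
    (Dfun Ω H δ u = 0 → rPW H δ ≤ dnorm Ω u ∨ dnorm Ω u = 0) ∧
    (Dfun Ω H 1 u = 0 → rPW H 1 ≤ dnorm Ω u ∨ dnorm Ω u = 0) ∧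
    rPW H 1 = 2 * Real.sqrt (2 * Real.pi) / H := by
  obtain ⟨hsmooth, hcompact, hsupp⟩ := hu
  have hC2 : ContDiff ℝ 2 u := hsmooth.of_le (by norm_cast)
  have dichotomy (ε : ℝ) := nehari_norm_dichotomy_general Ω hH.ne' ε hC2 hcompact hsupp
  exact ⟨dichotomy δ, dichotomy 1, by rw [rPW, mul_one]⟩
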